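/- arXiv:1102.0748 — 4 statements merged into one kernel-verified Lean document; each statement's English description precedes it below -/
import Mathlib

section
/- For every q in the open unit ball B = {z ∈ ℂ : |z| < 1}, one has lim_{n→∞} |∑_{k=-n}^{n} (-1)^k q^{k(k-1)/2} · C(2n, n+k)|^{1/(2n)} = 2, where C(m, j) denotes the binomial coefficient. -/
open scoped Classical

/-- Asymmetric crossing of two chords: `B = {a,b}` with `a < b` starts strictly
before `C = {c,d}` and they interleave: `a < c < b < d`. -/
def CrossAsym (B C : Finset ℕ) : Prop :=
  ∃ a b c d : ℕ, a < c ∧ c < b ∧ b < d ∧ B = {a, b} ∧ C = {c, d}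

/-- Two blocks cross: `a < c < b < d` or `c < a < d < b`. -/
def Crosses (B C : Finset ℕ) : Prop := CrossAsym B C ∨ CrossAsym C B

/-- A pairing on `[2n] = {1, …, 2n}`: a partition of `{1, …, 2n}` into blocks of size 2. -/
def IsPairing (n : ℕ) (π : Finset (Finset ℕ)) : Prop :=
  (∀ B ∈ π, B.card = 2 ∧ B ⊆ Finset.Icc 1 (2 * n)) ∧
  (∀ x ∈ Finset.Icc 1 (2 * n), ∃! B, B ∈ π ∧ x ∈ B)

/-- Number of crossings of a pairing: the number of unordered pairs of blocks that cross
(each crossing unordered pair `{B, C}` satisfies the asymmetric condition exactly once). -/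
noncomputable def crNum (π : Finset (Finset ℕ)) : ℕ :=
  Set.ncard {p : Finset ℕ × Finset ℕ | p.1 ∈ π ∧ p.2 ∈ π ∧ CrossAsym p.1 p.2}

/-- A pairing is parity-reversing if each block consists of one odd and one even number. -/
def ParityReversing (π : Finset (Finset ℕ)) : Prop :=
  ∀ B ∈ π, ∃ a b : ℕ, B = {a, b} ∧ Odd a ∧ Even b

/-- A pairing is connected if its blocks cannot be split into two nonempty families
with no crossing between the families. -/
def ConnectedPairing (π : Finset (Finset ℕ)) : Prop :=
  ¬ ∃ S T : Finset (Finset ℕ), S ∪ T = π ∧ Disjoint S T ∧ S.Nonempty ∧ T.Nonempty ∧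
      ∀ B ∈ S, ∀ C ∈ T, ¬ Crosses B C

/-- `tCount n k`: the number of pairings on `[2n]` with exactly `k` crossings. -/
noncomputable def tCount (n k : ℕ) : ℕ :=
  Set.ncard {π : Finset (Finset ℕ) | IsPairing n π ∧ crNum π = k}

/-- `rCount n k`: the number of parity-reversing pairings on `[2n]` with exactly `k` crossings. -/
noncomputable def rCount (n k : ℕ) : ℕ :=
  Set.ncard {π : Finset (Finset ℕ) | IsPairing n π ∧ ParityReversing π ∧ crNum π = k}

/-- `bCount n k`: the number of connected parity-reversing pairings on `[2n]`
with exactly `k` crossings. -/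
noncomputable def bCount (n k : ℕ) : ℕ :=
  Set.ncard {π : Finset (Finset ℕ) |
    IsPairing n π ∧ ParityReversing π ∧ ConnectedPairing π ∧ crNum π = k}

/-- `bTot n`: the number of connected parity-reversing pairings on `[2n]` (equals 1 for `n = 0`). -/
noncomputable def bTot (n : ℕ) : ℕ :=
  Set.ncard {π : Finset (Finset ℕ) |
    IsPairing n π ∧ ParityReversing π ∧ ConnectedPairing π}

/-- The Touchard alternating sum `∑_{k=-n}^n (-1)^k q^{k(k-1)/2} C(2n, n+k)`. -/
noncomputable def touchardSum (n : ℕ) (q : ℂ) : ℂ :=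
  ∑ k ∈ Finset.Icc (-(n : ℤ)) (n : ℤ),
    (-1 : ℂ) ^ k * q ^ ((k * (k - 1)) / 2).toNat * ((2 * n).choose ((n : ℤ) + k).toNat : ℂ)

/-- `T_n(q) = ∑_k t_{n,k} q^k` as a complex polynomial function
(all crossing numbers of pairings on `[2n]` satisfy `k ≤ n*n`). -/
noncomputable def Tpoly (n : ℕ) (q : ℂ) : ℂ :=
  ∑ k ∈ Finset.range (n * n + 1), (tCount n k : ℂ) * q ^ k

/-- `T_n(q) = ∑_k t_{n,k} q^k` as a real polynomial function. -/
noncomputable def TpolyR (n : ℕ) (q : ℝ) : ℝ :=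
  ∑ k ∈ Finset.range (n * n + 1), (tCount n k : ℝ) * q ^ k

/-- `R_n(q) = ∑_k r_{n,k} q^k` as a real polynomial function. -/
noncomputable def RpolyR (n : ℕ) (q : ℝ) : ℝ :=
  ∑ k ∈ Finset.range (n * n + 1), (rCount n k : ℝ) * q ^ k

/-- Non-crossing partitions of `{1, …, 2n}` all of whose blocks have even size. -/
noncomputable def NCEvenPartitions (n : ℕ) : Finset (Finset (Finset ℕ)) :=
  ((Finset.Icc 1 (2 * n)).powerset.powerset).filter (fun π =>
    (∀ B ∈ π, B.Nonempty ∧ Even B.card) ∧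
    (∀ x ∈ Finset.Icc 1 (2 * n), ∃! B, B ∈ π ∧ x ∈ B) ∧
    ¬ ∃ a b c d : ℕ, a < b ∧ b < c ∧ c < d ∧
        ∃ B ∈ π, ∃ C ∈ π, B ≠ C ∧ a ∈ B ∧ c ∈ B ∧ b ∈ C ∧ d ∈ C)
noncomputable def QP (q : ℂ) (n : ℕ) : ℂ := ∏ i ∈ Finset.range n, (1 - q ^ (i + 1))

noncomputable def US (q : ℂ) (j : ℕ) : ℂ := (-1) ^ j * q ^ (j * (j + 1) / 2)

noncomputable def GB (q : ℂ) (m j : ℕ) : ℂ :=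
  if j ≤ m then QP q (2 * m + 1) / (QP q (m - j) * QP q (m + 1 + j)) else 0

lemma QP_succ (q : ℂ) (n : ℕ) : QP q (n + 1) = QP q n * (1 - q ^ (n + 1)) := by
  simp [QP, Finset.prod_range_succ]

lemma one_sub_ne (q : ℂ) (hq : ‖q‖ < 1) (n : ℕ) : 1 - q ^ (n + 1) ≠ 0 := by
  intro h
  have h1 : q ^ (n + 1) = 1 := (sub_eq_zero.mp h).symm
  have h2 : ‖q‖ ^ (n + 1) = 1 := by rw [← norm_pow, h1]; simp
  have h3 : ‖q‖ ^ (n + 1) < 1 := pow_lt_one₀ (norm_nonneg _) hq (by omega)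
  linarith

lemma QP_ne (q : ℂ) (hq : ‖q‖ < 1) (n : ℕ) : QP q n ≠ 0 :=
  Finset.prod_ne_zero_iff.mpr fun i _ => one_sub_ne q hq i

lemma tri_succ (j : ℕ) : (j + 1) * (j + 1 + 1) / 2 = j * (j + 1) / 2 + (j + 1) := by
  have : (j + 1) * (j + 1 + 1) = j * (j + 1) + (j + 1) * 2 := by ring
  rw [this, Nat.add_mul_div_right _ _ (by norm_num)]

lemma US_succ (q : ℂ) (j : ℕ) : US q (j + 1) = - q ^ (j + 1) * US q j := by
  rw [US, US, tri_succ, pow_add, pow_succ]; ring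

lemma GB_add (q : ℂ) (a j : ℕ) :
    GB q (j + a) j = QP q (2 * (j + a) + 1) / (QP q a * QP q (j + a + 1 + j)) := by
  simp [GB]

lemma GB_next (q : ℂ) (hq : ‖q‖ < 1) (a j : ℕ) :
    GB q (j + a) (j + 1) =
      QP q (2 * (j + a) + 1) * (1 - q ^ a) / (QP q a * QP q (j + a + 1 + j + 1)) := by
  rcases a with _ | a
  · simp [GB]
  · have h : j + (a + 1) = (j + 1) + a := by ring
    have h2 : j + 1 + a + 1 + (j + 1) = j + 1 + a + 1 + j + 1 := by ring
    rw [h, GB_add, QP_succ q a, h2]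
    have := one_sub_ne q hq a
    have := QP_ne q hq a
    have := QP_ne q hq (j + 1 + a + 1 + j + 1)
    field_simp

lemma GB_rec_zero (q : ℂ) (hq : ‖q‖ < 1) (m : ℕ) :
    GB q (m + 1) 0 = (1 + q ^ (2 * m + 2) + q ^ (m + 1)) * GB q m 0
      + q ^ (m + 2) * GB q m 1 := by
  have e1 := GB_add q (m + 1) 0
  have e2 := GB_add q m 0
  have e3 := GB_next q hq m 0
  simp only [zero_add, add_zero] at e1 e2 e3
  rw [e1, e2, e3]
  have h1 : 2 * (m + 1) + 1 = 2 * m + 1 + 1 + 1 := by ring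
  rw [h1]
  simp only [QP_succ]
  have := one_sub_ne q hq m
  have := one_sub_ne q hq (m + 1)
  have := QP_ne q hq m
  have := QP_ne q hq (2 * m)
  field_simp
  ring

lemma GB_rec_succ (q : ℂ) (hq : ‖q‖ < 1) (a j : ℕ) :
    GB q (j + a + 1) (j + 1) = (1 + q ^ (2 * (j + a) + 2)) * GB q (j + a) (j + 1)
      + q ^ a * GB q (j + a) j + q ^ (j + a + j + 3) * GB q (j + a) (j + 2) := by
  rcases a with _ | a
  · simp [GB]
    have := QP_ne q hq (2 * j + 1)
    have := QP_ne q hq (2 * (j + 1) + 1)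
    have h : j + 1 + j = 2 * j + 1 := by ring
    have h' : j + 1 + 1 + (j + 1) = 2 * (j + 1) + 1 := by ring
    have h0 : QP q 0 = 1 := by simp [QP]
    rw [h, h', h0]
    field_simp
  · have e1 := GB_add q (a + 1) (j + 1)
    have e2 := GB_add q a (j + 1)
    have e3 := GB_next q hq a (j + 1)
    have e4 := GB_add q (a + 1) j
    have h1 : j + 1 + (a + 1) = j + (a + 1) + 1 := by ring
    have h2 : j + 1 + a = j + (a + 1) := by ring
    rw [h1] at e1
    rw [h2] at e2 e3
    rw [e1, e2, e3, e4]
    obtain ⟨s, hs⟩ : ∃ s, s = j + a + 1 + j := ⟨_, rfl⟩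
    have k1 : j + (a + 1) + 1 + 1 + (j + 1) = s + 1 + 1 + 1 := by omega
    have k2 : j + (a + 1) + 1 + (j + 1) = s + 1 + 1 := by omega
    have k3 : j + (a + 1) + 1 + j = s + 1 := by omega
    have k4 : 2 * (j + (a + 1) + 1) + 1 = 2 * (j + (a + 1)) + 1 + 1 + 1 := by omega
    rw [k1, k2, k3, k4]
    rw [QP_succ q (2 * (j + (a + 1)) + 1 + 1), QP_succ q (2 * (j + (a + 1)) + 1)]
    simp only [QP_succ q s, QP_succ q a, QP_succ q (s + 1), QP_succ q (s + 1 + 1)]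
    have := one_sub_ne q hq a
    have := one_sub_ne q hq s
    have := one_sub_ne q hq (s + 1)
    have := one_sub_ne q hq (s + 1 + 1)
    have := QP_ne q hq a
    have := QP_ne q hq s
    generalize QP q (2 * (j + (a + 1)) + 1) = X
    field_simp
    subst hs
    ring

lemma GB_zero_of_lt (q : ℂ) {m j : ℕ} (h : m < j) : GB q m j = 0 := by
  simp [GB, not_le.mpr h]

lemma finite_jacobi (q : ℂ) (hq : ‖q‖ < 1) (m : ℕ) :
    ∑ j ∈ Finset.range (m + 1), (2 * (j : ℂ) + 1) * (US q j * GB q m j) = QP q m ^ 2 := by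
  induction m with
  | zero =>
    have : QP q 1 ≠ 0 := QP_ne q hq 1
    simp [US, GB, QP] at *
    field_simp
    exact this
  | succ m ih =>
    have r0 : US q 0 * GB q (m + 1) 0 = (1 + q ^ (2 * m + 2) + q ^ (m + 1)) * (US q 0 * GB q m 0)
        - q ^ (m + 1) * (US q 1 * GB q m 1) := by
      rw [GB_rec_zero q hq, US_succ]; ring
    have r1 : ∀ j ∈ Finset.range (m + 1),
        (2 * ((j + 1 : ℕ) : ℂ) + 1) * (US q (j + 1) * GB q (m + 1) (j + 1)) =
        (1 + q ^ (2 * m + 2)) * ((2 * ((j + 1 : ℕ) : ℂ) + 1) * (US q (j + 1) * GB q m (j + 1)))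
        - q ^ (m + 1) * ((2 * (j : ℂ) + 1) * (US q j * GB q m j))
        - q ^ (m + 1) * (2 * (US q j * GB q m j))
        - q ^ (m + 1) * ((2 * ((j + 2 : ℕ) : ℂ) + 1) * (US q (j + 2) * GB q m (j + 2)))
        + q ^ (m + 1) * (2 * (US q (j + 2) * GB q m (j + 2))) := by
      intro j hj
      obtain ⟨a, rfl⟩ := Nat.exists_eq_add_of_le (Nat.lt_succ_iff.mp (Finset.mem_range.mp hj))
      rw [GB_rec_succ q hq, US_succ q (j + 1), US_succ q j]
      push_cast
      ring
    rw [Finset.sum_range_succ', Finset.sum_congr rfl r1, Nat.cast_zero, r0]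
    simp only [Finset.sum_add_distrib, Finset.sum_sub_distrib, ← Finset.mul_sum]
    have z1 : GB q m (m + 1) = 0 := GB_zero_of_lt q (by omega)
    have z2 : GB q m (m + 2) = 0 := GB_zero_of_lt q (by omega)
    -- shifted sums
    have sh1 : ∀ f : ℕ → ℂ, f (m + 1) = 0 → ∑ j ∈ Finset.range (m + 1), f (j + 1)
        = ∑ j ∈ Finset.range (m + 1), f j - f 0 := by
      intro f hf
      have := Finset.sum_range_succ' f (m + 1)
      rw [Finset.sum_range_succ, hf] at this
      rw [← sub_eq_iff_eq_add.mpr this]; ring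
    have s1 := sh1 (fun j => (2 * (j : ℂ) + 1) * (US q j * GB q m j)) (by simp [z1])
    have s2 := sh1 (fun j => (2 * ((j + 1 : ℕ) : ℂ) + 1) * (US q (j + 1) * GB q m (j + 1)))
      (by simp [z2])
    have s3 := sh1 (fun j => US q j * GB q m j) (by simp [z1])
    have s4 := sh1 (fun j => US q (j + 1) * GB q m (j + 1)) (by simp [z2])
    simp only [add_assoc, Nat.reduceAdd] at s1 s2 s3 s4 ih ⊢
    simp only [s1, s2, s3, s4, ih]
    rw [QP_succ]
    push_cast
    ring

lemma QP_tendsto (q : ℂ) (hq : ‖q‖ < 1) :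
    ∃ L : ℂ, L ≠ 0 ∧ Filter.Tendsto (QP q) Filter.atTop (nhds L) := by
  have hs : Summable (fun i : ℕ => ‖-q ^ (i + 1)‖) := by
    simp only [norm_neg, norm_pow]
    exact (summable_nat_add_iff 1).mpr (summable_geometric_of_lt_one (norm_nonneg _) hq)
  refine ⟨∏' i : ℕ, (1 + -q ^ (i + 1)), ?_, ?_⟩
  · refine tprod_one_add_ne_zero_of_summable (fun i => ?_) hs
    rw [← sub_eq_add_neg]; exact one_sub_ne q hq i
  · have := (multipliable_one_add_of_summable hs).hasProd.tendsto_prod_nat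
    refine this.congr fun n => ?_
    simp [QP, sub_eq_add_neg]

lemma US_norm_le (q : ℂ) (hq : ‖q‖ < 1) (j : ℕ) : ‖US q j‖ ≤ ‖q‖ ^ j := by
  simp only [US, norm_mul, norm_pow, norm_neg, norm_one, one_pow, one_mul]
  apply pow_le_pow_of_le_one (norm_nonneg _) hq.le
  rcases j with _ | j
  · simp
  · rw [tri_succ]; omega

lemma bound_summable (q : ℂ) (hq : ‖q‖ < 1) (C : ℝ) :
    Summable (fun j : ℕ => C * ((2 * (j : ℝ) + 1) * ‖q‖ ^ j)) := by
  have hq' : ‖(‖q‖)‖ < 1 := by simpa using hq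
  have h1 := summable_pow_mul_geometric_of_norm_lt_one 1 hq'
  have h0 := summable_pow_mul_geometric_of_norm_lt_one 0 hq'
  refine Summable.mul_left C (((h1.mul_left 2).add h0).congr fun j => ?_)
  simp; ring

lemma jacobi_ne_zero (q : ℂ) (hq : ‖q‖ < 1) :
    ∑' j : ℕ, (2 * (j : ℂ) + 1) * US q j ≠ 0 := by
  obtain ⟨L, hL, hQ⟩ := QP_tendsto q hq
  obtain ⟨C1, hC1⟩ := hQ.norm.bddAbove_range
  obtain ⟨C2, hC2⟩ := (hQ.inv₀ hL).norm.bddAbove_range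
  have hC1' : ∀ n, ‖QP q n‖ ≤ C1 := fun n => hC1 ⟨n, rfl⟩
  have hC2' : ∀ n, ‖(QP q n)⁻¹‖ ≤ C2 := fun n => hC2 ⟨n, rfl⟩
  have p1 : 0 ≤ C1 := (norm_nonneg _).trans (hC1' 0)
  have p2 : 0 ≤ C2 := (norm_nonneg _).trans (hC2' 0)
  have hGB : ∀ m j, ‖GB q m j‖ ≤ C1 * (C2 * C2) := by
    intro m j
    unfold GB
    split_ifs
    · rw [div_eq_mul_inv, mul_inv, norm_mul, norm_mul]
      gcongr <;> first | exact hC1' _ | exact hC2' _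
    · simp; positivity
  have hlim : ∀ j, Filter.Tendsto (fun m => GB q m j) Filter.atTop (nhds (L / (L * L))) := by
    intro j
    have a1 : Filter.Tendsto (fun m => QP q (2 * m + 1)) Filter.atTop (nhds L) :=
      hQ.comp (Filter.tendsto_atTop_mono (fun m => by show m ≤ 2 * m + 1; omega) Filter.tendsto_id)
    have a2 : Filter.Tendsto (fun m => QP q (m - j)) Filter.atTop (nhds L) :=
      hQ.comp (Filter.tendsto_sub_atTop_nat j)
    have a3 : Filter.Tendsto (fun m => QP q (m + 1 + j)) Filter.atTop (nhds L) :=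
      hQ.comp (Filter.tendsto_atTop_mono (fun m => by show m ≤ m + 1 + j; omega)
        Filter.tendsto_id)
    refine (a1.div (a2.mul a3) (mul_ne_zero hL hL)).congr' ?_
    filter_upwards [Filter.eventually_ge_atTop j] with m hm
    simp [GB, hm]
  have key := tendsto_tsum_of_dominated_convergence
    (f := fun (m j : ℕ) => (2 * (j : ℂ) + 1) * (US q j * GB q m j))
    (g := fun j : ℕ => (2 * (j : ℂ) + 1) * (US q j * (L / (L * L))))
    (𝓕 := Filter.atTop) (bound_summable q hq (C1 * (C2 * C2)))
    (fun j => ((hlim j).const_mul _).const_mul _)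
    (Filter.Eventually.of_forall fun m j => by
      rw [norm_mul, norm_mul]
      have e : ‖(2 * (j : ℂ) + 1)‖ = 2 * (j : ℝ) + 1 := by
        rw [show (2 * (j : ℂ) + 1) = ((2 * j + 1 : ℕ) : ℂ) by push_cast; ring, Complex.norm_natCast]
        push_cast; ring
      rw [e]
      calc (2 * (j : ℝ) + 1) * (‖US q j‖ * ‖GB q m j‖)
          ≤ (2 * (j : ℝ) + 1) * (‖q‖ ^ j * (C1 * (C2 * C2))) := by
            gcongr
            · exact US_norm_le q hq j
            · exact hGB m j
        _ = _ := by ring)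
  have hfin : ∀ m, ∑' j : ℕ, (2 * (j : ℂ) + 1) * (US q j * GB q m j) = QP q m ^ 2 := by
    intro m
    rw [← finite_jacobi q hq m]
    apply tsum_eq_sum
    intro j hj
    rw [GB_zero_of_lt q (by simpa using hj)]; simp
  simp only [hfin] at key
  have := tendsto_nhds_unique key (hQ.pow 2)
  intro h0
  have h1 : ∑' j : ℕ, (2 * (j : ℂ) + 1) * (US q j * (L / (L * L))) = 0 := by
    simp only [← mul_assoc]
    rw [tsum_mul_right, h0, zero_mul]
  rw [h1] at this
  exact hL (by simpa using this.symm)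

lemma sum_Icc_split (f : ℤ → ℂ) (n : ℕ) :
    ∑ k ∈ Finset.Icc (-(n : ℤ)) (n : ℤ), f k =
      ∑ j ∈ Finset.range (n + 1), f (-(j : ℤ)) + ∑ j ∈ Finset.range n, f ((j : ℤ) + 1) := by
  induction n with
  | zero => simp
  | succ n ih =>
    have h : Finset.Icc (-((n + 1 : ℕ) : ℤ)) ((n + 1 : ℕ) : ℤ) =
        insert (-((n + 1 : ℕ) : ℤ)) (insert ((n : ℤ) + 1) (Finset.Icc (-(n : ℤ)) (n : ℤ))) := by
      ext k; simp only [Finset.mem_Icc, Finset.mem_insert]; push_cast; omega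
    rw [h, Finset.sum_insert, Finset.sum_insert, ih, Finset.sum_range_succ _ (n + 1),
      Finset.sum_range_succ (fun j : ℕ => f ((j : ℤ) + 1)) n]
    · ring
    · simp
    · simp only [Finset.mem_Icc, Finset.mem_insert]; push_cast; omega

lemma tri_int (j : ℕ) : (((j : ℤ) * (j + 1)) / 2).toNat = j * (j + 1) / 2 := by
  have : ((j : ℤ) * (j + 1)) / 2 = ((j * (j + 1) / 2 : ℕ) : ℤ) := by push_cast; rfl
  rw [this, Int.toNat_natCast]

lemma touchard_eq (n : ℕ) (q : ℂ) : touchardSum n q =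
    ∑ j ∈ Finset.range (n + 1),
      US q j * (((2 * n).choose (n + j) : ℂ) - ((2 * n).choose (n + j + 1) : ℂ)) := by
  rw [touchardSum, sum_Icc_split]
  have z : ∑ j ∈ Finset.range (n + 1), US q j * ((2 * n).choose (n + j + 1) : ℂ) =
      ∑ j ∈ Finset.range n, US q j * ((2 * n).choose (n + j + 1) : ℂ) := by
    rw [Finset.sum_range_succ, Nat.choose_eq_zero_of_lt (by omega)]; simp
  simp only [mul_sub, Finset.sum_sub_distrib]
  rw [z, sub_eq_add_neg, ← Finset.sum_neg_distrib]
  congr 1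
  · refine Finset.sum_congr rfl fun j hj => ?_
    have hj' : j ≤ n := Nat.lt_succ_iff.mp (Finset.mem_range.mp hj)
    have e1 : (-(j : ℤ)) * -(j : ℤ) - -(j : ℤ) * 1 = (j : ℤ) * (j + 1) := by ring
    have e2 : ((n : ℤ) + -(j : ℤ)).toNat = n - j := by omega
    rw [e1, tri_int, e2, US, Nat.choose_symm_of_eq_add (show 2 * n = (n - j) + (n + j) by omega)]
    have e3 : (-1 : ℂ) ^ (-(j : ℤ)) = (-1) ^ j := by
      rw [zpow_neg, zpow_natCast, ← inv_pow]; norm_num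
    rw [e3]
  · refine Finset.sum_congr rfl fun j hj => ?_
    have e1 : ((j : ℤ) + 1) * ((j : ℤ) + 1) - ((j : ℤ) + 1) * 1 = (j : ℤ) * (j + 1) := by ring
    have e2 : ((n : ℤ) + ((j : ℤ) + 1)).toNat = n + j + 1 := by omega
    rw [e1, tri_int, e2, US]
    have e3 : (-1 : ℂ) ^ ((j : ℤ) + 1) = - (-1) ^ j := by
      rw [zpow_add₀ (by norm_num)]; simp
    rw [e3]; ring

lemma choose_step (n j : ℕ) (h : j ≤ n) :
    ((2 * n).choose (n + j + 1) : ℝ) * ((n : ℝ) + j + 1) =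
      ((2 * n).choose (n + j) : ℝ) * ((n : ℝ) - j) := by
  have h1 := Nat.choose_succ_right_eq (2 * n) (n + j)
  have h2 : 2 * n - (n + j) = n - j := by omega
  rw [h2] at h1
  have := congrArg (Nat.cast : ℕ → ℝ) h1
  push_cast [Nat.cast_sub h] at this
  exact this

lemma choose_diff (n j : ℕ) (h : j ≤ n) :
    ((2 * n).choose (n + j) : ℝ) - ((2 * n).choose (n + j + 1) : ℝ) =
      ((2 * n).choose (n + j) : ℝ) * ((2 * j + 1) / ((n : ℝ) + j + 1)) := by
  have := choose_step n j h
  have h0 : (0 : ℝ) < (n : ℝ) + j + 1 := by positivity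
  field_simp
  linarith

lemma tendsto_lin (a b : ℝ) :
    Filter.Tendsto (fun n : ℕ => ((n : ℝ) + a) / ((n : ℝ) + b)) Filter.atTop (nhds 1) := by
  have hb : Filter.Tendsto (fun n : ℕ => (n : ℝ) + b) Filter.atTop Filter.atTop :=
    Filter.tendsto_atTop_add_const_right _ _ tendsto_natCast_atTop_atTop
  have h1 : Filter.Tendsto (fun n : ℕ => 1 + (a - b) / ((n : ℝ) + b)) Filter.atTop (nhds (1 + 0)) :=
    tendsto_const_nhds.add (hb.const_div_atTop _)
  rw [add_zero] at h1
  refine h1.congr' ?_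
  filter_upwards [hb.eventually_gt_atTop 0] with n hn
  field_simp
  ring

lemma choose_ratio (j : ℕ) :
    Filter.Tendsto (fun n : ℕ => ((2 * n).choose (n + j) : ℝ) / (n.centralBinom : ℝ))
      Filter.atTop (nhds 1) := by
  induction j with
  | zero =>
    refine tendsto_const_nhds.congr fun n => ?_
    have : (n.centralBinom : ℝ) ≠ 0 := by exact_mod_cast n.centralBinom_ne_zero
    simp only [add_zero]
    rw [← Nat.centralBinom_eq_two_mul_choose, div_self this]
  | succ j ih =>
    have := ih.mul (tendsto_lin (-(j : ℝ)) ((j : ℝ) + 1))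
    rw [one_mul] at this
    refine this.congr' ?_
    filter_upwards [Filter.eventually_ge_atTop j] with n hn
    have h1 := choose_step n j hn
    have h0 : (0 : ℝ) < (n : ℝ) + j + 1 := by positivity
    have h2 : ((2 * n).choose (n + (j + 1)) : ℝ) =
      ((2 * n).choose (n + j) : ℝ) * ((n : ℝ) - j) / ((n : ℝ) + j + 1) := by
      rw [← add_assoc, eq_div_iff h0.ne', h1]
    rw [h2]
    have : (n.centralBinom : ℝ) ≠ 0 := by exact_mod_cast n.centralBinom_ne_zero
    rw [← add_assoc, ← sub_eq_add_neg]
    field_simp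

noncomputable def RT (n j : ℕ) : ℝ :=
  (((2 * n).choose (n + j) : ℝ) - ((2 * n).choose (n + j + 1) : ℝ)) /
    ((n.centralBinom : ℝ) / ((n : ℝ) + 1))

lemma RT_zero {n j : ℕ} (h : n < j) : RT n j = 0 := by
  rw [RT, Nat.choose_eq_zero_of_lt (by omega), Nat.choose_eq_zero_of_lt (by omega)]; simp

lemma RT_eq {n j : ℕ} (h : j ≤ n) : RT n j =
    (((2 * n).choose (n + j) : ℝ) / (n.centralBinom : ℝ)) *
      (((n : ℝ) + 1) / ((n : ℝ) + ((j : ℝ) + 1))) * (2 * (j : ℝ) + 1) := by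
  have : (n.centralBinom : ℝ) ≠ 0 := by exact_mod_cast n.centralBinom_ne_zero
  have h0 : (0 : ℝ) < (n : ℝ) + j + 1 := by positivity
  rw [RT, choose_diff n j h, ← add_assoc]
  field_simp

lemma RT_tendsto (j : ℕ) :
    Filter.Tendsto (fun n => RT n j) Filter.atTop (nhds (2 * (j : ℝ) + 1)) := by
  have := ((choose_ratio j).mul (tendsto_lin 1 ((j : ℝ) + 1))).mul_const (2 * (j : ℝ) + 1)
  rw [one_mul, one_mul] at this
  refine this.congr' ?_
  filter_upwards [Filter.eventually_ge_atTop j] with n hn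
  rw [RT_eq hn]

lemma RT_bound (n j : ℕ) : |RT n j| ≤ 2 * (j : ℝ) + 1 := by
  rcases lt_or_ge n j with h | h
  · rw [RT_zero h]; simp; positivity
  · rw [RT_eq h, abs_of_nonneg (by positivity)]
    have c0 : (0 : ℝ) < n.centralBinom := by exact_mod_cast n.centralBinom_pos
    have b1 : ((2 * n).choose (n + j) : ℝ) / (n.centralBinom : ℝ) ≤ 1 := by
      rw [div_le_one c0]; exact_mod_cast Nat.choose_le_centralBinom _ _
    have b2 : ((n : ℝ) + 1) / ((n : ℝ) + ((j : ℝ) + 1)) ≤ 1 := by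
      rw [div_le_one (by positivity)]; linarith [(Nat.cast_nonneg j : (0 : ℝ) ≤ j)]
    have b3 := mul_le_one₀ b1 (by positivity) b2
    calc _ ≤ 1 * (2 * (j : ℝ) + 1) := by gcongr
      _ = _ := one_mul _

lemma touchard_RT (n : ℕ) (q : ℂ) : touchardSum n q =
    (((n.centralBinom : ℝ) / ((n : ℝ) + 1) : ℝ) : ℂ) * ∑' j : ℕ, US q j * (RT n j : ℂ) := by
  rw [tsum_eq_sum (s := Finset.range (n + 1)), touchard_eq, Finset.mul_sum]
  · refine Finset.sum_congr rfl fun j _ => ?_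
    have c0 : (n.centralBinom : ℝ) / ((n : ℝ) + 1) ≠ 0 := by
      have : (n.centralBinom : ℝ) ≠ 0 := by exact_mod_cast n.centralBinom_ne_zero
      positivity
    have : ((n.centralBinom : ℝ) / ((n : ℝ) + 1)) * RT n j =
      ((2 * n).choose (n + j) : ℝ) - ((2 * n).choose (n + j + 1) : ℝ) := by
      rw [RT, mul_div_cancel₀ _ c0]
    rw [mul_left_comm, ← Complex.ofReal_mul, this]
    push_cast; ring
  · intro j hj
    rw [RT_zero (by simpa using hj)]; simp

lemma ratio_tendsto (q : ℂ) (hq : ‖q‖ < 1) :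
    Filter.Tendsto (fun n : ℕ => ∑' j : ℕ, US q j * (RT n j : ℂ)) Filter.atTop
      (nhds (∑' j : ℕ, (2 * (j : ℂ) + 1) * US q j)) := by
  refine tendsto_tsum_of_dominated_convergence (bound_summable q hq 1) (fun j => ?_)
    (Filter.Eventually.of_forall fun n j => ?_)
  · have := ((Complex.continuous_ofReal.tendsto _).comp (RT_tendsto j)).const_mul (US q j)
    rw [mul_comm (2 * (j : ℂ) + 1)]
    simpa using this
  · rw [norm_mul, Complex.norm_real, Real.norm_eq_abs, one_mul, mul_comm]
    gcongr
    · exact RT_bound n j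
    · exact US_norm_le q hq j

lemma final_limit (t s : ℕ → ℝ) (S : ℝ) (hS : 0 < S) (hs : Filter.Tendsto s Filter.atTop (nhds S))
    (ht : ∀ n, t n = (n.centralBinom : ℝ) / ((n : ℝ) + 1) * s n) :
    Filter.Tendsto (fun n : ℕ => t n ^ ((1 : ℝ) / (2 * (n : ℝ)))) Filter.atTop (nhds 2) := by
  have hlogn : Filter.Tendsto (fun n : ℕ => Real.log n / (n : ℝ)) Filter.atTop (nhds 0) :=
    (Real.isLittleO_log_id_atTop.tendsto_div_nhds_zero).comp tendsto_natCast_atTop_atTop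
  have hc : ∀ c : ℝ, Filter.Tendsto (fun n : ℕ => c / (n : ℝ)) Filter.atTop (nhds 0) :=
    fun c => tendsto_natCast_atTop_atTop.const_div_atTop c
  have hls : Filter.Tendsto (fun n => Real.log (s n)) Filter.atTop (nhds (Real.log S)) :=
    hs.log hS.ne'
  have hlsn : Filter.Tendsto (fun n : ℕ => Real.log (s n) / (n : ℝ)) Filter.atTop (nhds 0) :=
    hls.div_atTop tendsto_natCast_atTop_atTop
  -- the Catalan factor
  have hcat : Filter.Tendsto (fun n : ℕ =>
      Real.log ((n.centralBinom : ℝ) / ((n : ℝ) + 1)) / (n : ℝ)) Filter.atTop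
      (nhds (Real.log 4)) := by
    have lo : Filter.Tendsto (fun n : ℕ => Real.log 4 - (Real.log 4 / (n : ℝ)
        + 2 * (Real.log n / (n : ℝ)))) Filter.atTop (nhds (Real.log 4)) := by
      simpa using tendsto_const_nhds.sub ((hc (Real.log 4)).add (hlogn.const_mul 2))
    refine tendsto_of_tendsto_of_tendsto_of_le_of_le' lo tendsto_const_nhds ?_ ?_
    · filter_upwards [Filter.eventually_gt_atTop 0] with n hn
      have hn' : (0 : ℝ) < n := by exact_mod_cast hn
      have hn1 : (1 : ℝ) ≤ n := by exact_mod_cast hn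
      have h1 : (4 : ℝ) ^ n ≤ 2 * n * n.centralBinom := by
        exact_mod_cast Nat.four_pow_le_two_mul_self_mul_centralBinom n hn
      have h2 : (4 : ℝ) ^ n / (4 * (n : ℝ) ^ 2) ≤ (n.centralBinom : ℝ) / ((n : ℝ) + 1) := by
        rw [div_le_div_iff₀ (by positivity) (by positivity)]
        calc (4 : ℝ) ^ n * (n + 1) ≤ (2 * n * n.centralBinom) * (2 * n) := by
              gcongr; linarith
          _ = _ := by ring
      have h3 := Real.log_le_log (by positivity) h2
      rw [Real.log_div (by positivity) (by positivity), Real.log_mul (by norm_num) (by positivity),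
        Real.log_pow, Real.log_pow] at h3
      rw [le_div_iff₀ hn']
      refine le_trans (le_of_eq ?_) h3
      field_simp
      push_cast; ring
    · filter_upwards [Filter.eventually_gt_atTop 0] with n hn
      have hn' : (0 : ℝ) < n := by exact_mod_cast hn
      have c0 : (0 : ℝ) < n.centralBinom := by exact_mod_cast n.centralBinom_pos
      have h1 : (n.centralBinom : ℝ) ≤ 4 ^ n := by
        have : n.centralBinom ≤ 2 ^ (2 * n) := by
          rw [Nat.centralBinom_eq_two_mul_choose]; exact Nat.choose_le_two_pow _ _
        rw [pow_mul] at this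
        exact_mod_cast this
      have h2 : (n.centralBinom : ℝ) / ((n : ℝ) + 1) ≤ 4 ^ n :=
        (div_le_self c0.le (by linarith)).trans h1
      have h3 := Real.log_le_log (by positivity) h2
      rw [Real.log_pow] at h3
      rw [div_le_iff₀ hn']; linarith
  have hsum := (hcat.add hlsn).div_const 2
  have hexp := (Real.continuous_exp.tendsto _).comp hsum
  have e4 : Real.exp ((Real.log 4 + 0) / 2) = 2 := by
    rw [show (4 : ℝ) = 2 ^ 2 by norm_num, Real.log_pow]
    rw [show (((2 : ℕ) : ℝ) * Real.log 2 + 0) / 2 = Real.log 2 by push_cast; ring]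
    exact Real.exp_log (by norm_num)
  rw [e4] at hexp
  refine hexp.congr' ?_
  filter_upwards [hs.eventually (lt_mem_nhds hS)] with n hn
  have c0 : (0 : ℝ) < n.centralBinom := by exact_mod_cast n.centralBinom_pos
  have c1 : (0 : ℝ) < (n.centralBinom : ℝ) / ((n : ℝ) + 1) := by positivity
  rw [ht, Real.rpow_def_of_pos (by positivity), Real.log_mul c1.ne' hn.ne']
  simp only [Function.comp]
  congr 1
  rw [← add_div, div_div, mul_one_div, mul_comm (n : ℝ) 2]

/-- For every `q` in the open unit ball of `ℂ`,
`|∑_{k=-n}^n (-1)^k q^{k(k-1)/2} C(2n, n+k)|^{1/(2n)} → 2` as `n → ∞`. -/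
theorem touchardSum_abs_rpow_tendsto_two (q : ℂ) (hq : ‖q‖ < 1) :
    Filter.Tendsto (fun n : ℕ => ‖touchardSum n q‖ ^ ((1 : ℝ) / (2 * (n : ℝ))))
      Filter.atTop (nhds 2) := by
  refine final_limit (fun n => ‖touchardSum n q‖) _ _
    (norm_pos_iff.mpr (jacobi_ne_zero q hq)) (ratio_tendsto q hq).norm fun n => ?_
  show ‖touchardSum n q‖ = _
  rw [touchard_RT, norm_mul, Complex.norm_real, Real.norm_eq_abs, abs_of_nonneg (by positivity)]
end

section
/- (Touchard–Riordan formula) For every n ≥ 1 and every q ∈ ℂ, (1−q)^n · ∑_{π a pairing on [2n]} q^{cr(π)} = ∑_{k=-n}^{n} (-1)^k q^{k(k-1)/2} C(2n, n+k); equivalently, (1−q)^n · T_n(q) = ∑_{k=-n}^{n} (-1)^k q^{k(k-1)/2} C(2n, n+k). -/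
open scoped Classical

namespace TR

/-- `qG q h j` is the Gaussian binomial `[h+j choose j]`. -/
noncomputable def qG (q : ℂ) : ℕ → ℕ → ℂ
  | _, 0 => 1
  | 0, _ + 1 => 1
  | h + 1, j + 1 => qG q h (j + 1) + q ^ (h + 1) * qG q (h + 1) j

lemma qG_zero_right (q : ℂ) (h : ℕ) : qG q h 0 = 1 := by cases h <;> simp [qG]
lemma qG_zero_left (q : ℂ) (j : ℕ) : qG q 0 j = 1 := by cases j <;> simp [qG]
lemma qG_succ (q : ℂ) (h j : ℕ) :
    qG q (h+1) (j+1) = qG q h (j + 1) + q ^ (h + 1) * qG q (h + 1) j := by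
  rw [qG]

lemma qG_P_of_Q (q : ℂ) (h : ℕ)
    (hQ : ∀ j, (1 - q^(j+1)) * qG q h (j+1) = (1 - q^(h+j+1)) * qG q h j) (j : ℕ) :
    (1 - q^(h+1)) * qG q (h+1) j = (1 - q^(h+j+1)) * qG q h j := by
  induction j with
  | zero => simp [qG_zero_right]
  | succ j ih =>
    rw [qG_succ]
    have := hQ j
    linear_combination (q^(h+1)) * ih - q^(h+1) * this

lemma qG_Q (q : ℂ) (h : ℕ) :
    ∀ j, (1 - q^(j+1)) * qG q h (j+1) = (1 - q^(h+j+1)) * qG q h j := by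
  induction h with
  | zero => intro j; simp [qG_zero_left]
  | succ h ih =>
    intro j
    have hP := qG_P_of_Q q h ih j
    have := ih j
    rw [qG_succ]
    linear_combination this - hP

lemma qG_P (q : ℂ) (h j : ℕ) :
    (1 - q^(h+1)) * qG q (h+1) j = (1 - q^(h+j+1)) * qG q h j :=
  qG_P_of_Q q h (qG_Q q h) j

/-- connection coefficients -/
noncomputable def gg (q : ℂ) (h j : ℕ) : ℂ := (-1)^j * q^((j+1).choose 2) * qG q h j

lemma gg_zero (q : ℂ) (h : ℕ) : gg q h 0 = 1 := by simp [gg, qG_zero_right]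

lemma gg_rec (q : ℂ) (h j : ℕ) :
    gg q (h+1) (j+1) + gg q (h+1) j = gg q h (j+1) + (1 - q^(h+2)) * gg q (h+2) j := by
  unfold gg
  have e : (j+1+1).choose 2 = (j+1) + (j+1).choose 2 := by
    rw [Nat.choose_succ_succ' (j+1) 1]; simp
  rw [e, qG_succ]
  have := qG_P q (h+1) j
  linear_combination (-(-1)^j * q^((j+1).choose 2)) * this

lemma gg_rec0 (q : ℂ) (j : ℕ) :
    gg q 0 (j+1) + gg q 0 j = (1 - q) * gg q 1 j := by
  unfold gg
  have e : (j+1+1).choose 2 = (j+1) + (j+1).choose 2 := by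
    rw [Nat.choose_succ_succ' (j+1) 1]; simp
  rw [e]
  have := qG_P q 0 j
  simp only [qG_zero_left] at *
  linear_combination (-(-1)^j * q^((j+1).choose 2)) * this

/-- ballot numbers -/
def aa (m : ℕ) : ℕ → ℂ
  | 0 => 1
  | k + 1 => (m.choose (k+1) : ℂ) - m.choose k

lemma aa_succ (m k : ℕ) : aa (m+1) (k+1) = aa m (k+1) + aa m k := by
  cases k with
  | zero => simp [aa]
  | succ k => simp only [aa, Nat.choose_succ_succ' m]; push_cast; ring

lemma aa_mid (i : ℕ) : aa (2*i+1) (i+1) = 0 := by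
  simp only [aa]
  rw [Nat.choose_symm_half]; ring

noncomputable def vv (q : ℂ) (i h : ℕ) : ℂ :=
  ∑ j ∈ Finset.range (i+1), aa (h+2*i) (i-j) * gg q h j

lemma vv_zero (q : ℂ) (h : ℕ) : vv q 0 h = 1 := by simp [vv, aa, gg_zero]

lemma aux (M i : ℕ) (f : ℕ → ℂ) :
    ∑ j ∈ Finset.range (i+2), aa (M+1) (i+1-j) * f j =
    aa M (i+1) * f 0 + ∑ j ∈ Finset.range (i+1), aa M (i-j) * (f (j+1) + f j) := by
  rw [Finset.sum_range_succ]
  have h1 : ∀ j ∈ Finset.range (i+1), aa (M+1) (i+1-j) * f j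
      = aa M (i+1-j) * f j + aa M (i-j) * f j := by
    intro j hj
    have : i + 1 - j = (i - j) + 1 := by simp at hj; omega
    rw [this, aa_succ]; ring
  rw [Finset.sum_congr rfl h1, Finset.sum_add_distrib]
  simp only [mul_add, Finset.sum_add_distrib]
  have h2 : ∑ j ∈ Finset.range (i+2), aa M (i+1-j) * f j
     = ∑ j ∈ Finset.range (i+1), aa M (i-j) * f (j+1) + aa M (i+1) * f 0 := by
    rw [Finset.sum_range_succ']
    simp
  rw [Finset.sum_range_succ] at h2
  have h3 : aa (M+1) (i+1-(i+1)) = aa M (i+1-(i+1)) := by simp [aa]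
  rw [h3]
  linear_combination h2

lemma vv_rec (q : ℂ) (i h : ℕ) :
    vv q (i+1) (h+1) = vv q (i+1) h + (1 - q^(h+2)) * vv q i (h+2) := by
  unfold vv
  have e : h + 1 + 2*(i+1) = (h+2*(i+1)) + 1 := by ring
  have e' : h + 2 + 2*i = h+2*(i+1) := by ring
  rw [e, e', aux]
  rw [Finset.sum_range_succ' _ (i+1)]
  simp only [gg_rec, gg_zero, mul_add (aa _ _), Finset.sum_add_distrib, Finset.mul_sum,
    Nat.add_sub_add_right, Nat.sub_zero]
  have : ∀ x : ℕ, aa (h+2*(i+1)) (i-x) * ((1 - q^(h+2)) * gg q (h+2) x)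
     = (1 - q^(h+2)) * (aa (h+2*(i+1)) (i-x) * gg q (h+2) x) := by intro x; ring
  rw [Finset.sum_congr rfl (fun x _ => this x)]
  abel

lemma vv_rec0 (q : ℂ) (i : ℕ) :
    vv q (i+1) 0 = (1 - q) * vv q i 1 := by
  unfold vv
  have e : 0 + 2*(i+1) = (2*i+1) + 1 := by ring
  rw [e, aux, aa_mid, Finset.mul_sum, zero_mul, zero_add]
  refine Finset.sum_congr rfl fun j _ => ?_
  rw [gg_rec0, add_comm 1 (2*i)]; ring

lemma W_eq (q : ℂ) (W : ℕ → ℕ → ℂ) (h00 : W 0 0 = 1) (hbig : ∀ m h, m < h → W m h = 0)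
    (h0 : ∀ m, W (m+1) 0 = W m 1)
    (hs : ∀ m h, W (m+1) (h+1) = W m h + (∑ i ∈ Finset.range (h+2), q^i) * W m (h+2))
    (i : ℕ) : ∀ h, (1-q)^i * W (h+2*i) h = vv q i h := by
  induction i with
  | zero =>
    intro h
    rw [vv_zero]
    induction h with
    | zero => simpa using h00
    | succ h ih =>
      simp only [mul_zero, add_zero, pow_zero, one_mul] at *
      rw [hs, ih, hbig h (h+2) (by omega)]; ring
  | succ i ih =>
    intro h
    induction h with
    | zero =>
      rw [vv_rec0, ← ih 1]
      have e : 0 + 2*(i+1) = (1 + 2*i) + 1 := by ring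
      rw [e, h0]; ring
    | succ h ih2 =>
      rw [vv_rec, ← ih2, ← ih (h+2)]
      have e : h + 1 + 2*(i+1) = (h+2*(i+1)) + 1 := by ring
      have e' : h + 2 + 2*i = h+2*(i+1) := by ring
      rw [e, e', hs]
      have := mul_neg_geom_sum q (h+2)
      rw [← this]; ring

lemma touchardSum_eq (n : ℕ) (q : ℂ) : touchardSum n q = vv q n 0 := by
  have key : ∀ f : ℤ → ℂ, ∑ k ∈ Finset.Icc (-(n:ℤ)) n, f k =
      ∑ j ∈ Finset.range (n+1), f (-(j:ℤ)) + ∑ j ∈ Finset.range n, f ((j:ℤ)+1) := by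
    intro f
    have : Finset.Icc (-(n:ℤ)) n = (Finset.range (n+1)).image (fun j : ℕ => -(j:ℤ)) ∪
        (Finset.range n).image (fun j : ℕ => (j:ℤ)+1) := by
      ext k
      simp only [Finset.mem_Icc, Finset.mem_union, Finset.mem_image, Finset.mem_range]
      constructor
      · rintro ⟨h1, h2⟩
        rcases le_or_gt k 0 with h | h
        · left; exact ⟨(-k).toNat, by omega, by omega⟩
        · right; exact ⟨(k-1).toNat, by omega, by omega⟩
      · rintro (⟨a, h1, h2⟩ | ⟨a, h1, h2⟩) <;> omega
    rw [this, Finset.sum_union, Finset.sum_image, Finset.sum_image]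
    · intro a _ b _ h; simpa using h
    · intro a _ b _ h; simpa using h
    · rw [Finset.disjoint_left]
      simp only [Finset.mem_image, Finset.mem_range]
      rintro k ⟨a, h1, h2⟩ ⟨b, h3, h4⟩
      omega
  unfold touchardSum vv
  rw [key, Finset.sum_range_succ, Finset.sum_range_succ, add_right_comm, ← Finset.sum_add_distrib]
  have ch : ∀ j : ℕ, (j+1).choose 2 = (j+1)*j/2 := by
    intro j; rw [Nat.choose_two_right]; simp
  have ex1 : ∀ j : ℕ, (((-(j:ℤ)) * (-(j:ℤ) - 1)) / 2).toNat = (j+1).choose 2 := by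
    intro j
    rw [ch]
    have : (-(j:ℤ)) * (-(j:ℤ) - 1) = (((j+1)*j : ℕ) : ℤ) := by push_cast; ring
    rw [this]; omega
  have ex2 : ∀ j : ℕ, ((((j:ℤ)+1) * ((j:ℤ)+1 - 1)) / 2).toNat = (j+1).choose 2 := by
    intro j
    rw [ch]
    have : ((j:ℤ)+1) * ((j:ℤ)+1 - 1) = (((j+1)*j : ℕ) : ℤ) := by push_cast; ring
    rw [this]; omega
  have sg1 : ∀ j : ℕ, (-1:ℂ)^(-(j:ℤ)) = (-1)^j := by
    intro j
    rw [zpow_neg, zpow_natCast, ← inv_pow]; norm_num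
  have sg2 : ∀ j : ℕ, (-1:ℂ)^((j:ℤ)+1) = -(-1)^j := by
    intro j
    rw [zpow_add₀ (by norm_num), zpow_natCast]; simp
  congr 1
  · refine Finset.sum_congr rfl fun j hj => ?_
    rw [Finset.mem_range] at hj
    rw [ex1, ex2, sg1, sg2, gg, qG_zero_left]
    obtain ⟨d, rfl⟩ : ∃ d, n = j + 1 + d := ⟨n - j - 1, by omega⟩
    have e1 : ((↑(j+1+d) : ℤ) + -(j:ℤ)).toNat = d + 1 := by push_cast; omega
    have e2 : ((↑(j+1+d) : ℤ) + ((j:ℤ)+1)).toNat = 2*(j+1+d) - d := by push_cast; omega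
    have e3 : j + 1 + d - j = d + 1 := by omega
    rw [e1, e2, e3, Nat.choose_symm (by omega), zero_add, aa]
    ring
  · rw [ex1, sg1, gg, qG_zero_left]
    simp [aa]

/-- Perfect matchings of a finite set. -/
def PO (X : Finset ℕ) (M : Finset (Finset ℕ)) : Prop :=
  (∀ B ∈ M, B.card = 2 ∧ B ⊆ X) ∧ (∀ x ∈ X, ∃! B, B ∈ M ∧ x ∈ B)

noncomputable def Pr (X : Finset ℕ) : Finset (Finset (Finset ℕ)) :=
  X.powerset.powerset.filter (PO X)

lemma mem_Pr (X : Finset ℕ) (M : Finset (Finset ℕ)) : M ∈ Pr X ↔ PO X M := by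
  simp only [Pr, Finset.mem_filter, Finset.mem_powerset, and_iff_right_iff_imp]
  intro h B hB
  exact Finset.mem_powerset.2 (h.1 B hB).2

lemma PO_insert {X : Finset ℕ} {N c : ℕ} (hN : N ∉ X) (hc : c ∈ X) {M : Finset (Finset ℕ)}
    (hM : PO (X.erase c) M) : PO (insert N X) (insert {c, N} M) := by
  have hcN : c ≠ N := fun h => hN (h ▸ hc)
  have hsub : ∀ B ∈ M, ∀ y ∈ B, y ≠ c ∧ y ≠ N := by
    intro B hB y hy
    have := (hM.1 B hB).2 hy
    rw [Finset.mem_erase] at this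
    exact ⟨this.1, fun h => hN (h ▸ this.2)⟩
  constructor
  · intro B hB
    rw [Finset.mem_insert] at hB
    rcases hB with rfl | hB
    · refine ⟨Finset.card_pair hcN, ?_⟩
      intro y hy
      simp only [Finset.mem_insert, Finset.mem_singleton] at hy ⊢
      rcases hy with rfl | rfl
      · exact Or.inr hc
      · exact Or.inl rfl
    · refine ⟨(hM.1 B hB).1, fun y hy => ?_⟩
      exact Finset.mem_insert_of_mem (Finset.mem_of_mem_erase ((hM.1 B hB).2 hy))
  · intro x hx
    by_cases h : x = c ∨ x = N
    · refine ⟨{c, N}, ⟨Finset.mem_insert_self _ _, by simpa using h⟩, ?_⟩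
      rintro B ⟨hB, hxB⟩
      rw [Finset.mem_insert] at hB
      rcases hB with hB | hB
      · exact hB
      · have := hsub B hB x hxB; tauto
    · push Not at h
      have hx' : x ∈ X.erase c := by
        rw [Finset.mem_insert] at hx
        rw [Finset.mem_erase]; tauto
      obtain ⟨B, ⟨hB, hxB⟩, hu⟩ := hM.2 x hx'
      refine ⟨B, ⟨Finset.mem_insert_of_mem hB, hxB⟩, ?_⟩
      rintro C ⟨hC, hxC⟩
      rw [Finset.mem_insert] at hC
      rcases hC with rfl | hC
      · simp at hxC; tauto
      · exact hu C ⟨hC, hxC⟩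

lemma PO_exists {X : Finset ℕ} {N : ℕ} (hN : N ∉ X) {M : Finset (Finset ℕ)}
    (hM : PO (insert N X) M) : ∃ c ∈ X, ∃ M', PO (X.erase c) M' ∧ insert {c, N} M' = M := by
  obtain ⟨B, ⟨hB, hNB⟩, hu⟩ := hM.2 N (Finset.mem_insert_self _ _)
  obtain ⟨hcard, hsub⟩ := hM.1 B hB
  obtain ⟨c, hcN, rfl⟩ : ∃ c, c ≠ N ∧ B = {c, N} := by
    obtain ⟨x, y, hxy, rfl⟩ := Finset.card_eq_two.1 hcard
    simp only [Finset.mem_insert, Finset.mem_singleton] at hNB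
    rcases hNB with rfl | rfl
    · exact ⟨y, hxy.symm, Finset.pair_comm _ _⟩
    · exact ⟨x, hxy, rfl⟩
  have hcX : c ∈ X := by
    have := hsub (Finset.mem_insert_self c {N})
    rw [Finset.mem_insert] at this; tauto
  refine ⟨c, hcX, M.erase {c, N}, ⟨?_, ?_⟩, Finset.insert_erase hB⟩
  · intro C hC
    rw [Finset.mem_erase] at hC
    refine ⟨(hM.1 C hC.2).1, fun y hy => ?_⟩
    have h1 := (hM.1 C hC.2).2 hy
    have h2 : y ≠ N := by
      rintro rfl; exact hC.1 (hu C ⟨hC.2, hy⟩)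
    have h3 : y ≠ c := by
      rintro rfl
      exact hC.1 ((hM.2 y h1).unique ⟨hC.2, hy⟩ ⟨hB, by simp⟩)
    rw [Finset.mem_insert] at h1
    rw [Finset.mem_erase]; tauto
  · intro x hx
    rw [Finset.mem_erase] at hx
    obtain ⟨C, ⟨hC, hxC⟩, hCu⟩ := hM.2 x (Finset.mem_insert_of_mem hx.2)
    refine ⟨C, ⟨Finset.mem_erase.2 ⟨?_, hC⟩, hxC⟩, ?_⟩
    · rintro rfl
      simp only [Finset.mem_insert, Finset.mem_singleton] at hxC
      rcases hxC with h | h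
      · exact hx.1 h
      · exact hN (h ▸ hx.2)
    · rintro D ⟨hD, hxD⟩
      exact hCu D ⟨Finset.mem_of_mem_erase hD, hxD⟩

lemma sum_Pr_insert {X : Finset ℕ} {N : ℕ} (hN : N ∉ X) (f : Finset (Finset ℕ) → ℂ) :
    ∑ M ∈ Pr (insert N X), f M = ∑ c ∈ X, ∑ M ∈ Pr (X.erase c), f (insert {c, N} M) := by
  rw [Finset.sum_sigma']
  symm
  have hnot : ∀ c M, PO (X.erase c) M → ∀ B ∈ M, N ∉ B := by
    intro c M hM B hB h
    exact hN (Finset.mem_of_mem_erase ((hM.1 B hB).2 h))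
  refine Finset.sum_bij (fun p _ => insert {p.1, N} p.2) ?_ ?_ ?_ ?_
  · rintro ⟨c, M⟩ h
    simp only [Finset.mem_sigma, mem_Pr] at h ⊢
    exact PO_insert hN h.1 h.2
  · rintro ⟨c, M⟩ h ⟨c', M'⟩ h' heq
    simp only [Finset.mem_sigma, mem_Pr] at h h' heq
    have n1 := hnot _ _ h.2
    have n2 := hnot _ _ h'.2
    have hc : c = c' := by
      have h1 : ({c, N} : Finset ℕ) ∈ insert {c', N} M' := heq ▸ Finset.mem_insert_self _ _
      rw [Finset.mem_insert] at h1
      rcases h1 with h1 | h1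
      · have : c ∈ ({c', N} : Finset ℕ) := h1 ▸ Finset.mem_insert_self _ _
        simp only [Finset.mem_insert, Finset.mem_singleton] at this
        rcases this with h2 | h2
        · exact h2
        · exact absurd (h2 ▸ h.1) hN
      · exact absurd (by simp) (n2 _ h1)
    subst hc
    have e1 : M = (insert {c, N} M).erase {c, N} :=
      (Finset.erase_insert (fun hh => n1 _ hh (by simp))).symm
    have e2 : M' = (insert {c, N} M').erase {c, N} :=
      (Finset.erase_insert (fun hh => n2 _ hh (by simp))).symm
    rw [e1, e2, heq]
  · intro M hM
    rw [mem_Pr] at hM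
    obtain ⟨c, hc, M', hM', e⟩ := PO_exists hN hM
    exact ⟨⟨c, M'⟩, by simp [mem_Pr, hc, hM'], e⟩
  · intro p _; rfl

def strad (B : Finset ℕ) (s : ℕ) : Prop := ∃ a ∈ B, ∃ b ∈ B, a < s ∧ s < b

noncomputable def cr (M : Finset (Finset ℕ)) : ℕ :=
  ∑ B ∈ M, ∑ C ∈ M, if CrossAsym B C then 1 else 0

noncomputable def st (M : Finset (Finset ℕ)) (S : Finset ℕ) : ℕ :=
  ∑ B ∈ M, ∑ s ∈ S, if strad B s then 1 else 0

lemma crNum_eq (M : Finset (Finset ℕ)) : crNum M = cr M := by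
  unfold crNum cr
  rw [← Finset.sum_product' M M (fun B C => if CrossAsym B C then 1 else 0),
    ← Finset.card_filter, ← Set.ncard_coe_finset]
  congr 1
  ext p
  simp [and_assoc]

lemma cross_last {B : Finset ℕ} {c N : ℕ} (hcN : c < N) (hB : B.card = 2) (hlt : ∀ y ∈ B, y < N) :
    CrossAsym B {c, N} ↔ strad B c := by
  constructor
  · rintro ⟨a, b, c', d, h1, h2, h3, rfl, h4⟩
    have hc : c' = c := by
      have : c' ∈ ({c, N} : Finset ℕ) := h4 ▸ by simp
      simp only [Finset.mem_insert, Finset.mem_singleton] at this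
      rcases this with h | h
      · exact h
      · have := hlt b (by simp); omega
    subst hc
    exact ⟨a, by simp, b, by simp, h1, h2⟩
  · rintro ⟨a, ha, b, hb, h1, h2⟩
    refine ⟨a, b, c, N, h1, h2, hlt b hb, ?_, rfl⟩
    symm
    apply Finset.eq_of_subset_of_card_le
    · intro y hy; simp at hy; rcases hy with rfl | rfl <;> assumption
    · rw [hB, Finset.card_pair (by omega)]

lemma not_cross_last {B : Finset ℕ} {c N : ℕ} (hlt : ∀ y ∈ B, y ≤ N) :
    ¬ CrossAsym {c, N} B := by
  rintro ⟨a, b, c', d, h1, h2, h3, h4, rfl⟩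
  have h5 := hlt d (by simp)
  have : N ∈ ({a, b} : Finset ℕ) := h4 ▸ by simp
  simp at this
  omega

lemma stat_insert {M : Finset (Finset ℕ)} {S : Finset ℕ} {c N : ℕ} (hcN : c < N)
    (hM : ∀ B ∈ M, B.card = 2) (hlt : ∀ B ∈ M, ∀ y ∈ B, y < N)
    (hS : ∀ s ∈ S, s < N) (hcS : c ∉ S) :
    cr (insert {c, N} M) + st (insert {c, N} M) S =
      (S.filter (fun s => c < s)).card + (cr M + st M (insert c S)) := by
  have hnot : ({c, N} : Finset ℕ) ∉ M := fun h => lt_irrefl N (hlt _ h N (by simp))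
  have e1 : cr (insert {c, N} M) = cr M + ∑ B ∈ M, if strad B c then 1 else 0 := by
    unfold cr
    rw [Finset.sum_insert hnot]
    have z : ∑ C ∈ insert {c, N} M, (if CrossAsym {c, N} C then 1 else 0) = 0 := by
      apply Finset.sum_eq_zero
      intro C hC
      rw [if_neg]
      apply not_cross_last
      intro y hy
      rw [Finset.mem_insert] at hC
      rcases hC with rfl | hC
      · simp at hy; omega
      · exact (hlt C hC y hy).le
    rw [z, zero_add, ← Finset.sum_add_distrib]
    refine Finset.sum_congr rfl fun B hB => ?_
    rw [Finset.sum_insert hnot, add_comm]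
    simp only [cross_last hcN (hM B hB) (hlt B hB)]
  have e2 : st (insert {c, N} M) S = (S.filter (fun s => c < s)).card + st M S := by
    unfold st
    rw [Finset.sum_insert hnot, Finset.card_filter]
    congr 1
    refine Finset.sum_congr rfl fun s hs => ?_
    have := hS s hs
    have : strad {c, N} s ↔ c < s := by
      constructor
      · rintro ⟨a, ha, b, hb, h1, h2⟩
        simp at ha hb; omega
      · intro h; exact ⟨c, by simp, N, by simp, h, this⟩
    simp only [this]
  have e3 : st M (insert c S) = st M S + ∑ B ∈ M, if strad B c then 1 else 0 := by
    unfold st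
    rw [← Finset.sum_add_distrib]
    refine Finset.sum_congr rfl fun B hB => ?_
    rw [Finset.sum_insert hcS, add_comm]
  rw [e1, e2, e3]; ring

noncomputable def FF (q : ℂ) (m : ℕ) (S : Finset ℕ) : ℂ :=
  ∑ M ∈ Pr (Finset.Icc 1 m \ S), q ^ (cr M + st M S)

lemma FF_insert (q : ℂ) (m : ℕ) (S : Finset ℕ) (hS : S ⊆ Finset.Icc 1 m) :
    FF q (m+1) (insert (m+1) S) = FF q m S := by
  unfold FF
  have e : Finset.Icc 1 (m+1) \ insert (m+1) S = Finset.Icc 1 m \ S := by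
    ext x; simp only [Finset.mem_sdiff, Finset.mem_Icc, Finset.mem_insert]
    constructor
    · rintro ⟨h1, h2⟩; push Not at h2; exact ⟨by omega, h2.2⟩
    · rintro ⟨h1, h2⟩; exact ⟨by omega, by push Not; exact ⟨by omega, h2⟩⟩
  rw [e]
  refine Finset.sum_congr rfl fun M hM => ?_
  rw [mem_Pr] at hM
  congr 2
  unfold st
  refine Finset.sum_congr rfl fun B hB => ?_
  have hn : m + 1 ∉ S := fun h => by have := hS h; simp at this
  rw [Finset.sum_insert hn, if_neg, zero_add]
  rintro ⟨a, ha, b, hb, h1, h2⟩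
  have := (hM.1 B hB).2 hb
  simp at this; omega

lemma FF_not (q : ℂ) (m : ℕ) (S : Finset ℕ) (hS : S ⊆ Finset.Icc 1 m) :
    FF q (m+1) S = ∑ c ∈ Finset.Icc 1 m \ S,
      q ^ ((insert c S).filter (fun s => c < s)).card * FF q m (insert c S) := by
  unfold FF
  have hn : m + 1 ∉ S := fun h => by have := hS h; simp at this
  have e : Finset.Icc 1 (m+1) \ S = insert (m+1) (Finset.Icc 1 m \ S) := by
    ext x; simp only [Finset.mem_sdiff, Finset.mem_Icc, Finset.mem_insert]
    constructor
    · rintro ⟨h1, h2⟩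
      by_cases h : x = m+1
      · exact Or.inl h
      · exact Or.inr ⟨by omega, h2⟩
    · rintro (rfl | ⟨h1, h2⟩)
      · exact ⟨by omega, hn⟩
      · exact ⟨by omega, h2⟩
  rw [e, sum_Pr_insert (by simp)]
  refine Finset.sum_congr rfl fun c hc => ?_
  have e2 : (Finset.Icc 1 m \ S).erase c = Finset.Icc 1 m \ insert c S := by
    ext x; simp only [Finset.mem_sdiff, Finset.mem_Icc, Finset.mem_insert, Finset.mem_erase]
    tauto
  have e3 : (insert c S).filter (fun s => c < s) = S.filter (fun s => c < s) := by
    rw [Finset.filter_insert, if_neg (lt_irrefl c)]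
  rw [e2, e3, Finset.mul_sum]
  refine Finset.sum_congr rfl fun M hM => ?_
  rw [mem_Pr] at hM
  rw [Finset.mem_sdiff, Finset.mem_Icc] at hc
  rw [← pow_add, stat_insert (by omega) (fun B hB => (hM.1 B hB).1) ?_ ?_ hc.2]
  · intro B hB y hy
    have := (hM.1 B hB).2 hy
    simp only [Finset.mem_sdiff, Finset.mem_Icc] at this; omega
  · intro s hs
    have := hS hs
    simp only [Finset.mem_Icc] at this; omega

lemma sum_inv (q : ℂ) (S : Finset ℕ) :
    ∑ c ∈ S, q ^ (S.filter (fun s => c < s)).card = ∑ i ∈ Finset.range S.card, q ^ i := by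
  induction S using Finset.induction_on_min with
  | empty => simp
  | insert a S ha ih =>
    have hn : a ∉ S := fun h => lt_irrefl _ (ha a h)
    rw [Finset.sum_insert hn, Finset.card_insert_of_notMem hn, Finset.sum_range_succ, ← ih, add_comm]
    congr 1
    · refine Finset.sum_congr rfl fun c hc => ?_
      rw [Finset.filter_insert, if_neg (not_lt.2 (ha c hc).le)]
    · rw [Finset.filter_insert, if_neg (lt_irrefl a), Finset.filter_true_of_mem ha]

noncomputable def WW (q : ℂ) (m h : ℕ) : ℂ :=
  ∑ S ∈ Finset.powersetCard h (Finset.Icc 1 m), FF q m S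

lemma sum_not (q : ℂ) (m h : ℕ) :
    ∑ S ∈ Finset.powersetCard h (Finset.Icc 1 m), FF q (m+1) S =
      (∑ i ∈ Finset.range (h+1), q^i) * WW q m (h+1) := by
  rw [Finset.sum_congr rfl (fun S hS => FF_not q m S (Finset.mem_powersetCard.1 hS).1)]
  have : (∑ i ∈ Finset.range (h+1), q^i) * WW q m (h+1) =
      ∑ S ∈ Finset.powersetCard (h+1) (Finset.Icc 1 m), ∑ c ∈ S,
        q ^ (S.filter (fun s => c < s)).card * FF q m S := by
    unfold WW
    rw [Finset.mul_sum]
    refine Finset.sum_congr rfl fun S hS => ?_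
    rw [← Finset.sum_mul, sum_inv, (Finset.mem_powersetCard.1 hS).2]
  rw [this, Finset.sum_sigma', Finset.sum_sigma']
  refine Finset.sum_bij' (fun p _ => ⟨insert p.2 p.1, p.2⟩) (fun p _ => ⟨p.1.erase p.2, p.2⟩)
    ?_ ?_ ?_ ?_ ?_
  · rintro ⟨S, c⟩ hp
    simp only [Finset.mem_sigma, Finset.mem_powersetCard, Finset.mem_sdiff] at hp ⊢
    obtain ⟨⟨h1, h2⟩, h3, h4⟩ := hp
    exact ⟨⟨Finset.insert_subset h3 h1, by rw [Finset.card_insert_of_notMem h4, h2]⟩, by simp⟩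
  · rintro ⟨S, c⟩ hp
    simp only [Finset.mem_sigma, Finset.mem_powersetCard, Finset.mem_sdiff] at hp ⊢
    obtain ⟨⟨h1, h2⟩, h3⟩ := hp
    exact ⟨⟨(Finset.erase_subset _ _).trans h1, by rw [Finset.card_erase_of_mem h3, h2]; rfl⟩,
      h1 h3, by simp⟩
  · rintro ⟨S, c⟩ hp
    simp only [Finset.mem_sigma, Finset.mem_powersetCard, Finset.mem_sdiff] at hp
    simp [Finset.erase_insert hp.2.2]
  · rintro ⟨S, c⟩ hp
    simp only [Finset.mem_sigma] at hp
    simp [Finset.insert_erase hp.2]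
  · rintro ⟨S, c⟩ hp
    rfl

lemma WW_zero (q : ℂ) (m : ℕ) : WW q (m+1) 0 = WW q m 1 := by
  have := sum_not q m 0
  simp only [zero_add, Finset.range_one, Finset.sum_singleton, pow_zero, one_mul] at this
  rw [← this]; simp [WW]

lemma WW_succ (q : ℂ) (m h : ℕ) :
    WW q (m+1) (h+1) = WW q m h + (∑ i ∈ Finset.range (h+2), q^i) * WW q m (h+2) := by
  rw [← sum_not q m (h+1)]
  have hn : m + 1 ∉ Finset.Icc 1 m := by simp
  have e : Finset.Icc 1 (m+1) = insert (m+1) (Finset.Icc 1 m) := by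
    ext x; simp only [Finset.mem_Icc, Finset.mem_insert]; omega
  unfold WW
  rw [e, Finset.powersetCard_succ_insert hn, Finset.sum_union, add_comm, Finset.sum_image]
  · congr 1
    exact Finset.sum_congr rfl fun S hS => FF_insert q m S (Finset.mem_powersetCard.1 hS).1
  · intro S hS T hT hST
    have a1 : m+1 ∉ S := fun h => hn ((Finset.mem_powersetCard.1 hS).1 h)
    have a2 : m+1 ∉ T := fun h => hn ((Finset.mem_powersetCard.1 hT).1 h)
    rw [← Finset.erase_insert a1, ← Finset.erase_insert a2]
    exact congrArg (fun U => Finset.erase U (m+1)) hST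
  · rw [Finset.disjoint_left]
    intro S hS hS'
    obtain ⟨T, _, rfl⟩ := Finset.mem_image.1 hS'
    exact hn ((Finset.mem_powersetCard.1 hS).1 (Finset.mem_insert_self _ _))

lemma WW_big (q : ℂ) (m h : ℕ) (hm : m < h) : WW q m h = 0 := by
  unfold WW
  rw [Finset.powersetCard_eq_empty.2 (by simpa using hm)]; simp

lemma WW_m0 (q : ℂ) (m : ℕ) : WW q m 0 = ∑ M ∈ Pr (Finset.Icc 1 m), q ^ cr M := by
  simp [WW, FF, st]

lemma WW_00 (q : ℂ) : WW q 0 0 = 1 := by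
  rw [WW_m0]
  have : Pr (Finset.Icc 1 0) = {∅} := by
    ext M
    rw [mem_Pr, Finset.mem_singleton]
    constructor
    · intro h
      rw [Finset.eq_empty_iff_forall_notMem]
      intro B hB
      obtain ⟨h1, h2⟩ := h.1 B hB
      simp at h2
      subst h2
      simp at h1
    · rintro rfl
      constructor <;> simp
  rw [this]; simp [cr]

lemma PO_card {n : ℕ} {M : Finset (Finset ℕ)} (hM : PO (Finset.Icc 1 (2*n)) M) : M.card = n := by
  have h1 : ∑ B ∈ M, B.card = 2 * M.card := by
    rw [Finset.sum_congr rfl (fun B hB => (hM.1 B hB).1)]; simp [mul_comm]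
  have h2 : (M.biUnion id).card = ∑ B ∈ M, B.card := by
    apply Finset.card_biUnion
    intro B hB C hC hne
    rw [Function.onFun, Finset.disjoint_left]
    intro x hx hx'
    exact hne ((hM.2 x ((hM.1 B hB).2 hx)).unique ⟨hB, hx⟩ ⟨hC, hx'⟩)
  have h3 : M.biUnion id = Finset.Icc 1 (2*n) := by
    ext x
    simp only [Finset.mem_biUnion, id]
    constructor
    · rintro ⟨B, hB, hx⟩; exact (hM.1 B hB).2 hx
    · intro hx
      obtain ⟨B, hB, _⟩ := hM.2 x hx
      exact ⟨B, hB⟩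
  rw [h3, Nat.card_Icc] at h2
  omega

lemma cr_le (M : Finset (Finset ℕ)) : cr M ≤ M.card * M.card := by
  unfold cr
  calc _ ≤ ∑ B ∈ M, ∑ C ∈ M, 1 := by
        refine Finset.sum_le_sum fun B _ => Finset.sum_le_sum fun C _ => ?_
        split_ifs <;> simp
    _ = _ := by simp

lemma Tpoly_eq (n : ℕ) (q : ℂ) : Tpoly n q = WW q (2*n) 0 := by
  rw [WW_m0]
  unfold Tpoly
  have hmaps : ∀ M ∈ Pr (Finset.Icc 1 (2*n)), cr M ∈ Finset.range (n*n+1) := by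
    intro M hM
    rw [mem_Pr] at hM
    have := cr_le M
    rw [PO_card hM] at this
    rw [Finset.mem_range]; omega
  rw [← Finset.sum_fiberwise_of_maps_to hmaps]
  refine Finset.sum_congr rfl fun k _ => ?_
  have h1 : ∑ M ∈ Pr (Finset.Icc 1 (2*n)) with cr M = k, q ^ cr M
      = ∑ M ∈ Pr (Finset.Icc 1 (2*n)) with cr M = k, q ^ k := by
    refine Finset.sum_congr rfl fun M hM => ?_
    rw [(Finset.mem_filter.1 hM).2]
  rw [h1, Finset.sum_const, nsmul_eq_mul]
  congr 2
  unfold tCount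
  rw [← Set.ncard_coe_finset]
  congr 1
  ext M
  simp only [Set.mem_ofPred_eq, Finset.coe_filter, mem_Pr, crNum_eq]
  rfl

end TR

/-- Touchard–Riordan formula: `(1−q)^n · T_n(q) = ∑_{k=-n}^n (-1)^k q^{k(k-1)/2} C(2n, n+k)`. -/
theorem touchard_riordan (n : ℕ) (hn : 1 ≤ n) (q : ℂ) :
    (1 - q) ^ n * Tpoly n q = touchardSum n q := by
  rw [TR.touchardSum_eq, TR.Tpoly_eq]
  have := TR.W_eq q (TR.WW q) (TR.WW_00 q) (TR.WW_big q) (TR.WW_zero q) (TR.WW_succ q) n 0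
  rwa [zero_add] at this
end

section
/- For every q ∈ (-1,1), lim_{n→∞} |T_n(q)|^{1/(2n)} = 2/√(1−q), where T_n(q) = ∑_{π a pairing on [2n]} q^{cr(π)}. -/
open scoped Classical

/-- q-integer -/
noncomputable def qlam (q : ℝ) (h : ℕ) : ℝ := ∑ i ∈ Finset.range h, q ^ i

theorem qlam_mul (q : ℝ) (h : ℕ) : (1 - q) * qlam q h = 1 - q ^ h := by
  unfold qlam
  exact mul_neg_geom_sum q h

theorem qlam_pos {q : ℝ} (h1 : -1 < q) (h2 : q < 1) (h : ℕ) : 0 < qlam q (h+1) := by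
  have h3 : |q| < 1 := abs_lt.2 ⟨h1, h2⟩
  have h4 : q ^ (h+1) < 1 := by
    calc q ^ (h+1) ≤ |q ^ (h+1)| := le_abs_self _
      _ = |q| ^ (h+1) := abs_pow _ _
      _ < 1 := pow_lt_one₀ (abs_nonneg _) h3 (by omega)
  have := qlam_mul q (h+1)
  by_contra hc
  nlinarith

/-- weighted path counts satisfy the recursion -/
structure PathRec (q : ℝ) (A : ℕ → ℕ → ℝ) : Prop where
  init0 : A 0 0 = 1
  init1 : ∀ h, A 0 (h+1) = 0
  step0 : ∀ N, A (N+1) 0 = qlam q 1 * A N 1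
  step1 : ∀ N h, A (N+1) (h+1) = A N h + qlam q (h+2) * A N (h+2)

theorem PathRec.nonneg {q : ℝ} {A : ℕ → ℕ → ℝ} (hA : PathRec q A) (h1 : -1 < q) (h2 : q < 1) :
    ∀ N h, 0 ≤ A N h := by
  intro N
  induction N with
  | zero =>
    intro h
    cases h with
    | zero => rw [hA.init0]; norm_num
    | succ h => rw [hA.init1]
  | succ N ih =>
    intro h
    cases h with
    | zero => rw [hA.step0]; exact mul_nonneg (qlam_pos h1 h2 0).le (ih _)
    | succ h =>
      rw [hA.step1]; exact add_nonneg (ih _) (mul_nonneg (qlam_pos h1 h2 _).le (ih _))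

/-- q-Hermite at 1 -/
noncomputable def galG (q : ℝ) : ℕ → ℝ
  | 0 => 1
  | 1 => 2
  | (n+2) => 2 * galG q (n+1) - (1 - q^(n+1)) * galG q n

theorem galG_inv {q : ℝ} (h1 : -1 < q) (h2 : q < 1) (n : ℕ) :
    0 < galG q n ∧ galG q n ≤ galG q (n+1) ∧ (1 - q^(n+1)) * galG q n ≤ galG q (n+1) := by
  have h3 : |q| ≤ 1 := (abs_lt.2 ⟨h1, h2⟩).le
  induction n with
  | zero =>
    simp [galG]; linarith
  | succ n ih =>
    obtain ⟨a, b, c⟩ := ih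
    have hp : 0 < galG q (n+1) := by linarith
    refine ⟨hp, ?_, ?_⟩
    · simp only [galG]; linarith
    · simp only [galG]
      have e : q^(n+1+1) = q^(n+1) * q := pow_succ _ _
      by_cases hq : 0 ≤ q^(n+1)
      · have : q^(n+1) * galG q n ≤ q^(n+1) * galG q (n+1) := mul_le_mul_of_nonneg_left b hq
        have h5 : 0 ≤ (1 + q) * (q^(n+1) * galG q n) := by
          apply mul_nonneg (by linarith) (mul_nonneg hq a.le)
        have h6 : 0 ≤ (1 - q^(n+1)+ q^(n+1+1) + q^(n+1)) := by
          have : |q^(n+1+1)| ≤ 1 := by rw [abs_pow]; exact pow_le_one₀ (abs_nonneg _) h3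
          have := abs_le.1 this
          linarith
        nlinarith [mul_nonneg h6 (sub_nonneg.2 b)]
      · push Not at hq
        have hq0 : q < 0 := by
          by_contra h; push Not at h
          exact absurd (pow_nonneg h (n+1)) (not_le.2 hq)
        have : 0 < q^(n+1+1) := by rw [e]; exact mul_pos_of_neg_of_neg hq hq0
        nlinarith [mul_pos this hp]

noncomputable def qpi (q : ℝ) (h : ℕ) : ℝ := ∏ i ∈ Finset.range h, qlam q (i+1)

theorem qpi_pos {q : ℝ} (h1 : -1 < q) (h2 : q < 1) (h : ℕ) : 0 < qpi q h :=
  Finset.prod_pos fun i _ => qlam_pos h1 h2 i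

theorem qpi_succ (q : ℝ) (h : ℕ) : qpi q (h+1) = qpi q h * qlam q (h+1) :=
  Finset.prod_range_succ _ _

theorem PathRec.upper {q : ℝ} {A : ℕ → ℕ → ℝ} (hA : PathRec q A) (h1 : -1 < q) (h2 : q < 1)
    {c : ℝ} (hc : 0 < c) (hc2 : c^2 * (1 - q) = 1) :
    ∀ N h, A N h * qpi q h ≤ (2*c)^N * (c^h * galG q h) := by
  have hl : ∀ h, qlam q h = c^2 * (1 - q^h) := by
    intro h
    rw [← qlam_mul, ← mul_assoc, hc2, one_mul]
  intro N
  induction N with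
  | zero =>
    intro h
    have := (galG_inv h1 h2 h).1
    cases h with
    | zero => simp [hA.init0, qpi, galG]
    | succ h => rw [hA.init1]; simp; positivity
  | succ N ih =>
    intro h
    cases h with
    | zero =>
      have := ih 1
      rw [hA.step0]
      simp [qpi, galG] at this ⊢
      rw [pow_succ]; linarith
    | succ h =>
      rw [hA.step1, add_mul]
      have a := mul_le_mul_of_nonneg_right (ih h) (qlam_pos h1 h2 h).le
      have b := ih (h+2)
      rw [qpi_succ, qpi_succ] at b
      rw [qpi_succ]
      have hg : galG q (h+2) = 2 * galG q (h+1) - (1 - q^(h+1)) * galG q h := by simp [galG]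
      rw [hg] at b
      have key : (2*c)^N * (c^h * galG q h) * qlam q (h+1) + (2*c)^N * (c^(h+2) * (2 * galG q (h+1) - (1 - q^(h+1)) * galG q h)) = (2*c)^(N+1) * (c^(h+1) * galG q (h+1)) := by
        rw [hl (h+1)]; ring
      linarith

noncomputable def bal : ℕ → ℕ → ℝ
  | 0, _ => 1
  | (d+1), j => ((2*d+2+j).choose (d+1) : ℝ) - ((2*d+2+j).choose d : ℝ)

theorem bal_zero (d : ℕ) : bal (d+1) 0 = bal d 1 := by
  cases d with
  | zero => norm_num [bal]
  | succ d =>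
    simp only [bal]
    have e : 2 * (d+1) + 2 + 0 = (2*d+3) + 1 := by ring
    have e2 : 2 * d + 2 + 1 = 2*d+3 := by ring
    rw [e, e2, Nat.choose_succ_succ, Nat.choose_succ_succ (2*d+3) d]
    have : (2*d+3).choose (d+1+1) = (2*d+3).choose (d+1) := by
      rw [← Nat.choose_symm_of_eq_add]; ring
    rw [Nat.succ_eq_add_one, this]
    push_cast; ring

theorem bal_succ (d j : ℕ) : bal (d+1) (j+1) = bal (d+1) j + bal d (j+2) := by
  cases d with
  | zero => simp [bal]; ring
  | succ d =>
    simp only [bal]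
    have e : 2 * (d+1) + 2 + (j+1) = (2*d+4+j) + 1 := by ring
    have e2 : 2 * (d+1) + 2 + j = 2*d+4+j := by ring
    have e3 : 2 * d + 2 + (j+2) = 2*d+4+j := by ring
    rw [e, e2, e3, Nat.choose_succ_succ, Nat.choose_succ_succ (2*d+4+j) d]
    push_cast; ring

theorem bal_cat (m : ℕ) : (m+1) * bal m 0 = (Nat.centralBinom m : ℝ) := by
  cases m with
  | zero => simp [bal]
  | succ d =>
    simp only [bal, Nat.centralBinom]
    have e : 2 * d + 2 + 0 = 2*(d+1) := by ring
    rw [e]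
    have := Nat.choose_succ_right_eq (2*(d+1)) d
    have e3 : 2*(d+1) - d = d + 2 := by omega
    rw [e3] at this
    have : (((2*(d+1)).choose (d+1) : ℕ) : ℝ) * (d+1) = ((2*(d+1)).choose d : ℕ) * (d+2) := by
      exact_mod_cast this
    push_cast
    linarith

theorem PathRec.diag {q : ℝ} {A : ℕ → ℕ → ℝ} (hA : PathRec q A) (h1 : -1 < q) (h2 : q < 1) (H : ℕ) :
    1 ≤ A H H := by
  induction H with
  | zero => rw [hA.init0]
  | succ H ih =>
    rw [hA.step1]
    have := mul_nonneg (qlam_pos h1 h2 (H+1)).le (hA.nonneg h1 h2 H (H+2))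
    linarith

theorem PathRec.lower {q : ℝ} {A : ℕ → ℕ → ℝ} (hA : PathRec q A) (h1 : -1 < q) (h2 : q < 1)
    {l : ℝ} (hl : 0 < l) (H : ℕ) (hH : ∀ h, H ≤ h → l ≤ qlam q h) :
    ∀ N d j, 2 * d + j = N → l^d * bal d j ≤ A (H + N) (H + j) := by
  have nn := hA.nonneg h1 h2
  -- weights
  have stp : ∀ N j, A N (H+j) + l * A N (H + j + 2) ≤ A (N+1) (H+j+1) := by
    intro N j
    rw [hA.step1]
    have := mul_le_mul_of_nonneg_right (hH (H+j+2) (by omega)) (nn N (H+j+2))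
    linarith
  have stp0 : ∀ N, l * A N (H + 1) ≤ A (N+1) H := by
    intro N
    cases H with
    | zero =>
      rw [hA.step0]
      exact mul_le_mul_of_nonneg_right (hH 1 (by omega)) (nn N 1)
    | succ H =>
      rw [hA.step1]
      have := mul_le_mul_of_nonneg_right (hH (H+2) (by omega)) (nn N (H+2))
      have := nn N H
      show l * A N (H+2) ≤ _
      linarith
  intro N
  induction N with
  | zero =>
    intro d j hd
    obtain rfl : d = 0 := by omega
    obtain rfl : j = 0 := by omega
    simpa [bal] using hA.diag h1 h2 H
  | succ N ih =>
    intro d j hd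
    cases d with
    | zero =>
      obtain rfl : j = N + 1 := by omega
      simpa [bal] using hA.diag h1 h2 (H + (N+1))
    | succ d =>
      cases j with
      | zero =>
        have a := ih d 1 (by omega)
        have b := stp0 (H+N)
        rw [bal_zero, pow_succ]
        have := mul_le_mul_of_nonneg_left a hl.le
        show _ ≤ A (H+N+1) H
        linarith
      | succ j =>
        have a := ih (d+1) j (by omega)
        have a' := mul_le_mul_of_nonneg_left (ih d (j+2) (by omega)) hl.le
        have b := stp (H+N) j
        rw [bal_succ]
        show _ ≤ A (H+N+1) (H+j+1)
        have : l^(d+1) * (bal (d+1) j + bal d (j+2)) = l^(d+1) * bal (d+1) j + l * (l^d * bal d (j+2)) := by ring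
        rw [this]
        exact le_trans (add_le_add a a') b

theorem PathRec.desc {q : ℝ} {A : ℕ → ℕ → ℝ} (hA : PathRec q A) (h1 : -1 < q) (h2 : q < 1) (H : ℕ) :
    ∀ N, qpi q H * A N H ≤ A (N + H) 0 := by
  have nn := hA.nonneg h1 h2
  induction H with
  | zero => intro N; simp [qpi]
  | succ H ih =>
    intro N
    have a : qlam q (H+1) * A N (H+1) ≤ A (N+1) H := by
      cases H with
      | zero => rw [hA.step0]
      | succ H => rw [hA.step1]; have := nn N H; linarith
    have b := mul_le_mul_of_nonneg_left a (qpi_pos h1 h2 H).le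
    have c := ih (N+1)
    rw [qpi_succ]
    have e : N + (H+1) = N + 1 + H := by ring
    rw [e]
    linarith

theorem PathRec.lim {q : ℝ} {A : ℕ → ℕ → ℝ} (hA : PathRec q A) (h1 : -1 < q) (h2 : q < 1) :
    Filter.Tendsto (fun n : ℕ => |A (2*n) 0| ^ ((1 : ℝ) / (2 * (n : ℝ))))
      Filter.atTop (nhds (2 / Real.sqrt (1 - q))) := by
  have nn := hA.nonneg h1 h2
  have hq : 0 < 1 - q := by linarith
  have hs := Real.sqrt_pos.2 hq
  have hs2 := Real.sq_sqrt hq.le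
  set s := Real.sqrt (1 - q) with hsdef
  have root : ∀ (n : ℕ) (t : ℝ), 0 < n → 0 ≤ t → (t^(2*n)) ^ ((1 : ℝ) / (2 * (n : ℝ))) = t := by
    intro n t hn ht
    rw [← Real.rpow_natCast, ← Real.rpow_mul ht]
    push_cast
    rw [mul_one_div_cancel (by positivity), Real.rpow_one]
  have hup : ∀ n, A (2*n) 0 ≤ (2/s)^(2*n) := by
    intro n
    have := hA.upper h1 h2 (c := 1/s) (by positivity) (by rw [← hs2]; field_simp) (2*n) 0
    simp [qpi, galG] at this
    simpa [div_eq_mul_inv] using this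
  have hlow : ∀ t, 0 < t → t < 2/s → ∀ᶠ n : ℕ in Filter.atTop, t^(2*n) ≤ A (2*n) 0 := by
    intro t ht hts
    have ht2 : t^2/4 < 1/(1-q) := by
      rw [← hs2]
      have : t^2 < (2/s)^2 := by gcongr
      rw [div_pow] at this
      calc t^2/4 < (2^2/s^2)/4 := by linarith
        _ = 1/s^2 := by ring
    obtain ⟨l, hl1, hl2⟩ := exists_between ht2
    have hl : 0 < l := lt_trans (by positivity) hl1
    have tl : Filter.Tendsto (fun h => qlam q h) Filter.atTop (nhds (1/(1-q))) := by
      have : (fun h => qlam q h) = fun h => (1 - q^h)/(1-q) := by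
        funext h; rw [← qlam_mul]; field_simp
      rw [this]
      have := tendsto_pow_atTop_nhds_zero_of_abs_lt_one (abs_lt.2 ⟨h1, h2⟩)
      simpa using (tendsto_const_nhds (x := (1:ℝ))).sub this |>.div_const (1-q)
    obtain ⟨H, hH⟩ := Filter.eventually_atTop.1 (tl.eventually_const_lt hl2)
    have hlo := hA.lower h1 h2 hl H (fun h hh => (hH h hh).le)
    -- main bound
    have main : ∀ m : ℕ, 0 < m → qpi q H * (4*l)^m ≤ A (2*(m+H)) 0 * (2*m*(m+1)) := by
      intro m hm
      have a := hlo (2*m) m 0 (by ring)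
      have b := hA.desc h1 h2 H (H+2*m)
      have e : H + 2*m + H = 2*(m+H) := by ring
      rw [e] at b
      have c : (4:ℝ)^m ≤ 2*m*(Nat.centralBinom m) := by
        exact_mod_cast Nat.four_pow_le_two_mul_self_mul_centralBinom m hm
      rw [← bal_cat] at c
      have p := qpi_pos h1 h2 H
      calc qpi q H * (4*l)^m = qpi q H * l^m * 4^m := by rw [mul_pow]; ring
        _ ≤ qpi q H * l^m * (2*m*((m+1)*bal m 0)) := by gcongr
        _ = qpi q H * (l^m * bal m 0) * (2*m*(m+1)) := by ring
        _ ≤ qpi q H * (A (H+2*m) (H+0)) * (2*m*(m+1)) := by gcongr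
        _ ≤ _ := by gcongr; exact b
    have hr : |t^2/(4*l)| < 1 := by
      rw [abs_of_pos (by positivity), div_lt_one (by positivity)]; linarith
    have T2 := tendsto_pow_const_mul_const_pow_of_abs_lt_one 2 hr
    have T1 := tendsto_pow_const_mul_const_pow_of_abs_lt_one 1 hr
    have T : Filter.Tendsto (fun m : ℕ => t^(2*H) * (2*((m:ℝ)^2 * (t^2/(4*l))^m + (m:ℝ)^1 * (t^2/(4*l))^m)))
        Filter.atTop (nhds 0) := by
      simpa using ((T2.add T1).const_mul 2).const_mul (t^(2*H))
    have ev := (T.eventually_le_const (qpi_pos h1 h2 H)).and (Filter.eventually_gt_atTop 0)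
    have ev2 := (Filter.tendsto_sub_atTop_nat H).eventually ev
    filter_upwards [ev2, Filter.eventually_ge_atTop H] with n hn hnH
    obtain ⟨m, rfl⟩ := Nat.exists_eq_add_of_le' hnH
    simp only [Nat.add_sub_cancel] at hn
    obtain ⟨hn1, hm⟩ := hn
    have mm := main m hm
    have hm' : (0:ℝ) < m := by exact_mod_cast hm
    have : t^(2*(m+H)) * (2*m*(m+1)) ≤ A (2*(m+H)) 0 * (2*m*(m+1)) := by
      refine le_trans ?_ mm
      refine le_trans (le_of_eq ?_) (mul_le_mul_of_nonneg_right hn1 (by positivity : 0 ≤ (4*l)^m))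
      rw [div_pow]
      field_simp
      ring
    exact le_of_mul_le_mul_right this (by positivity)
  rw [tendsto_order]
  constructor
  · intro a ha
    obtain ⟨t, ht1, ht2⟩ := exists_between (max_lt ha (by positivity : 0 < 2/s))
    have ht : 0 < t := lt_of_le_of_lt (le_max_right _ _) ht1
    filter_upwards [hlow t ht ht2, Filter.eventually_gt_atTop 0] with n hn hn0
    refine lt_of_lt_of_le (lt_of_le_of_lt (le_max_left _ _) ht1) ?_
    rw [abs_of_nonneg (nn _ _)]
    calc t = (t^(2*n)) ^ ((1 : ℝ) / (2 * (n : ℝ))) := (root n t hn0 ht.le).symm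
      _ ≤ _ := Real.rpow_le_rpow (by positivity) hn (by positivity)
  · intro a ha
    filter_upwards [Filter.eventually_gt_atTop 0] with n hn0
    refine lt_of_le_of_lt ?_ ha
    rw [abs_of_nonneg (nn _ _)]
    calc _ ≤ ((2/s)^(2*n)) ^ ((1 : ℝ) / (2 * (n : ℝ))) :=
          Real.rpow_le_rpow (nn _ _) (hup n) (by positivity)
      _ = _ := root n _ hn0 (by positivity)

def pmOpen (N : ℕ) (π : Finset (Finset ℕ)) : Finset ℕ :=
  (Finset.Icc 1 N).filter (fun x => ∀ B ∈ π, x ∉ B)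

def IsPM (N : ℕ) (π : Finset (Finset ℕ)) : Prop :=
  (∀ B ∈ π, B.card = 2 ∧ B ⊆ Finset.Icc 1 N) ∧
    ∀ B ∈ π, ∀ C ∈ π, ∀ x, x ∈ B → x ∈ C → B = C

def Cov (B : Finset ℕ) (x : ℕ) : Prop := ∃ a b : ℕ, a < x ∧ x < b ∧ B = {a, b}

noncomputable def cr2 (π : Finset (Finset ℕ)) : ℕ :=
  ∑ B ∈ π, ∑ C ∈ π, if CrossAsym B C then 1 else 0

noncomputable def covSum (π : Finset (Finset ℕ)) (S : Finset ℕ) : ℕ :=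
  ∑ B ∈ π, ∑ x ∈ S, if Cov B x then 1 else 0

noncomputable def PMs (N : ℕ) : Finset (Finset (Finset ℕ)) :=
  ((Finset.Icc 1 N).powerset.powerset).filter (IsPM N)

theorem mem_PMs {N : ℕ} {π : Finset (Finset ℕ)} : π ∈ PMs N ↔ IsPM N π := by
  simp only [PMs, Finset.mem_filter, Finset.mem_powerset, and_iff_right_iff_imp]
  intro h B hB
  exact Finset.mem_powerset.2 (h.1 B hB).2

theorem not_mem_of_gt {N : ℕ} {π : Finset (Finset ℕ)} (h : IsPM N π) {B : Finset ℕ} (hB : B ∈ π)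
    {x : ℕ} (hx : x ∈ B) : 1 ≤ x ∧ x ≤ N := Finset.mem_Icc.1 ((h.1 B hB).2 hx)

theorem mem_pmOpen {N : ℕ} {π : Finset (Finset ℕ)} {x : ℕ} :
    x ∈ pmOpen N π ↔ (1 ≤ x ∧ x ≤ N) ∧ ∀ B ∈ π, x ∉ B := by
  simp [pmOpen]

theorem IsPM.insert' {N : ℕ} {π : Finset (Finset ℕ)} (h : IsPM N π) {c : ℕ} (hc : c ∈ pmOpen N π) :
    IsPM (N+1) (insert {c, N+1} π) := by
  obtain ⟨⟨c1, c2⟩, c3⟩ := mem_pmOpen.1 hc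
  have key : ∀ B ∈ π, ∀ x, x ∈ B → ¬ (x = c ∨ x = N+1) := by
    rintro B hB x hx (rfl | rfl)
    · exact c3 B hB hx
    · have := (not_mem_of_gt h hB hx).2; omega
  constructor
  · intro B hB
    rcases Finset.mem_insert.1 hB with rfl | hB
    · refine ⟨Finset.card_pair (by omega), ?_⟩
      intro x hx
      simp only [Finset.mem_insert, Finset.mem_singleton] at hx
      rw [Finset.mem_Icc]; omega
    · refine ⟨(h.1 B hB).1, (h.1 B hB).2.trans (Finset.Icc_subset_Icc le_rfl (by omega))⟩
  · intro B hB C hC x hxB hxC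
    rcases Finset.mem_insert.1 hB with rfl | hB <;> rcases Finset.mem_insert.1 hC with rfl | hC
    · rfl
    · exact absurd (by simpa using hxB) (key C hC x hxC)
    · exact absurd (by simpa using hxC) (key B hB x hxB)
    · exact h.2 B hB C hC x hxB hxC

theorem pair_notMem {N : ℕ} {π : Finset (Finset ℕ)} (h : IsPM N π) (c : ℕ) :
    ({c, N+1} : Finset ℕ) ∉ π := by
  intro hB
  have := (not_mem_of_gt h hB (x := N+1) (by simp)).2
  omega

theorem PMs_split (N : ℕ) (g : Finset (Finset ℕ) → ℝ) :
    ∑ π ∈ PMs (N+1), g π = ∑ π ∈ PMs N, g π +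
      ∑ π ∈ PMs N, ∑ c ∈ pmOpen N π, g (insert {c, N+1} π) := by
  rw [← Finset.sum_filter_add_sum_filter_not (PMs (N+1)) (fun π => ∀ B ∈ π, N+1 ∉ B)]
  congr 1
  · apply Finset.sum_congr _ (fun _ _ => rfl)
    ext π
    simp only [Finset.mem_filter, mem_PMs]
    constructor
    · rintro ⟨h, h'⟩
      refine ⟨fun B hB => ⟨(h.1 B hB).1, fun x hx => ?_⟩, h.2⟩
      have := not_mem_of_gt h hB hx
      have h3 : x ≠ N+1 := by rintro rfl; exact h' B hB hx
      rw [Finset.mem_Icc]; omega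
    · intro h
      refine ⟨⟨fun B hB => ⟨(h.1 B hB).1, (h.1 B hB).2.trans (Finset.Icc_subset_Icc le_rfl (by omega))⟩, h.2⟩, ?_⟩
      intro B hB hx
      have := (not_mem_of_gt h hB hx).2
      omega
  · rw [Finset.sum_sigma']
    symm
    refine Finset.sum_bij (fun p _ => insert {p.2, N+1} p.1) ?_ ?_ ?_ (fun _ _ => rfl)
    · rintro ⟨π, c⟩ hp
      simp only [Finset.mem_sigma, mem_PMs] at hp
      simp only [Finset.mem_filter, mem_PMs]
      refine ⟨hp.1.insert' hp.2, ?_⟩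
      intro h
      exact h {c, N+1} (Finset.mem_insert_self _ _) (by simp)
    · rintro ⟨π, c⟩ hp ⟨π', c'⟩ hp' heq
      simp only [Finset.mem_sigma, mem_PMs] at hp hp'
      simp only at heq
      have e1 : ({c, N+1} : Finset ℕ) = {c', N+1} := by
        have : ({c, N+1} : Finset ℕ) ∈ insert {c', N+1} π' := by
          rw [← heq]; exact Finset.mem_insert_self _ _
        rcases Finset.mem_insert.1 this with h | h
        · exact h
        · exact absurd h (pair_notMem hp'.1 c)
      have e2 : c = c' := by
        have : c ∈ ({c', N+1} : Finset ℕ) := by rw [← e1]; simp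
        simp only [Finset.mem_insert, Finset.mem_singleton] at this
        have := (mem_pmOpen.1 hp.2).1
        omega
      subst e2
      have e3 : π = π' := by
        rw [← Finset.erase_insert (pair_notMem hp.1 c), heq, Finset.erase_insert (pair_notMem hp'.1 c)]
      subst e3
      rfl
    · intro π hπ
      simp only [Finset.mem_filter, mem_PMs] at hπ
      obtain ⟨h, h'⟩ := hπ
      push Not at h'
      obtain ⟨B, hB, hN⟩ := h'
      have : ∃ c, c ≠ N+1 ∧ B = {c, N+1} := by
        obtain ⟨x, y, hxy, rfl⟩ := Finset.card_eq_two.1 (h.1 B hB).1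
        simp only [Finset.mem_insert, Finset.mem_singleton] at hN
        rcases hN with rfl | rfl
        · exact ⟨y, hxy.symm, Finset.pair_comm _ _⟩
        · exact ⟨x, hxy, rfl⟩
      obtain ⟨c, hc, rfl⟩ := this
      have hcb := not_mem_of_gt h hB (x := c) (by simp)
      refine ⟨⟨π.erase {c, N+1}, c⟩, ?_, Finset.insert_erase hB⟩
      have dis : ∀ C ∈ π.erase {c, N+1}, ∀ x ∈ C, x ≠ c ∧ x ≠ N+1 := by
        intro C hC x hx
        obtain ⟨hC1, hC2⟩ := Finset.mem_erase.1 hC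
        constructor
        · rintro rfl; exact hC1 (h.2 C hC2 _ hB x hx (by simp))
        · rintro rfl; exact hC1 (h.2 C hC2 _ hB _ hx (by simp))
      simp only [Finset.mem_sigma, mem_PMs]
      refine ⟨⟨fun C hC => ⟨(h.1 C (Finset.mem_of_mem_erase hC)).1, fun x hx => ?_⟩,
        fun C hC D hD => h.2 C (Finset.mem_of_mem_erase hC) D (Finset.mem_of_mem_erase hD)⟩, ?_⟩
      · have a := (dis C hC x hx).2
        have b := not_mem_of_gt h (Finset.mem_of_mem_erase hC) hx
        rw [Finset.mem_Icc]; omega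
      · rw [mem_pmOpen]
        refine ⟨by omega, fun C hC hx => (dis C hC c hx).1 rfl⟩

theorem pair_eq_lt {a b c d : ℕ} (h1 : a < b) (h2 : c < d) (h : ({a, b} : Finset ℕ) = {c, d}) :
    a = c ∧ b = d := by
  have e1 : a ∈ ({c, d} : Finset ℕ) := by rw [← h]; simp
  have e2 : b ∈ ({c, d} : Finset ℕ) := by rw [← h]; simp
  simp only [Finset.mem_insert, Finset.mem_singleton] at e1 e2
  omega

theorem pmOpen_succ {N : ℕ} {π : Finset (Finset ℕ)} (h : IsPM N π) :
    pmOpen (N+1) π = insert (N+1) (pmOpen N π) := by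
  ext x
  simp only [Finset.mem_insert, mem_pmOpen]
  constructor
  · rintro ⟨a, b⟩
    by_cases hx : x = N+1
    · exact Or.inl hx
    · exact Or.inr ⟨by omega, b⟩
  · rintro (rfl | ⟨a, b⟩)
    · refine ⟨by omega, fun B hB hx => ?_⟩
      have := (not_mem_of_gt h hB hx).2
      omega
    · exact ⟨by omega, b⟩

theorem pmOpen_insert {N : ℕ} {π : Finset (Finset ℕ)} {c : ℕ} :
    pmOpen (N+1) (insert {c, N+1} π) = (pmOpen N π).erase c := by
  ext x
  simp only [Finset.mem_erase, mem_pmOpen, Finset.forall_mem_insert]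
  simp only [Finset.mem_insert, Finset.mem_singleton]
  constructor
  · rintro ⟨a, b, d⟩
    exact ⟨by tauto, by omega, d⟩
  · rintro ⟨a, b, d⟩
    exact ⟨by omega, by omega, d⟩

theorem cov_succ {N : ℕ} {π : Finset (Finset ℕ)} (h : IsPM N π) :
    covSum π (pmOpen (N+1) π) = covSum π (pmOpen N π) := by
  rw [pmOpen_succ h]
  unfold covSum
  apply Finset.sum_congr rfl
  intro B hB
  rw [Finset.sum_insert (by simp [mem_pmOpen]), if_neg, zero_add]
  rintro ⟨a, b, h1, h2, rfl⟩
  have := (not_mem_of_gt h hB (x := b) (by simp)).2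
  omega

theorem st_insert {N : ℕ} {π : Finset (Finset ℕ)} (h : IsPM N π) {c : ℕ} (hc : c ∈ pmOpen N π) :
    cr2 (insert {c, N+1} π) + covSum (insert {c, N+1} π) ((pmOpen N π).erase c) =
      cr2 π + covSum π (pmOpen N π) + ((pmOpen N π).filter (fun o => c < o)).card := by
  have hn := pair_notMem h c
  have hcb := (mem_pmOpen.1 hc).1
  have a1 : ∀ C ∈ insert {c, N+1} π, ¬ CrossAsym {c, N+1} C := by
    rintro C hC ⟨x, y, z, w, l1, l2, l3, e1, rfl⟩
    have := pair_eq_lt (by omega) (by omega) e1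
    have := (not_mem_of_gt (h.insert' hc) hC (x := w) (by simp)).2
    omega
  have a2 : ∀ B ∈ π, (CrossAsym B {c, N+1} ↔ Cov B c) := by
    intro B hB
    constructor
    · rintro ⟨x, y, z, w, l1, l2, l3, rfl, e1⟩
      have := pair_eq_lt (by omega) (by omega) e1
      exact ⟨x, y, by omega, by omega, rfl⟩
    · rintro ⟨x, y, l1, l2, rfl⟩
      have := (not_mem_of_gt h hB (x := y) (by simp)).2
      exact ⟨x, y, c, N+1, by omega, by omega, by omega, rfl, rfl⟩
  have a3 : ∀ x ∈ (pmOpen N π).erase c, (Cov {c, N+1} x ↔ c < x) := by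
    intro x hx
    have := (mem_pmOpen.1 (Finset.mem_of_mem_erase hx)).1
    constructor
    · rintro ⟨a, b, l1, l2, e⟩
      have := pair_eq_lt (by omega) (by omega) e
      omega
    · intro hx
      exact ⟨c, N+1, hx, by omega, rfl⟩
  have c1 : cr2 (insert {c, N+1} π) = cr2 π + ∑ B ∈ π, if Cov B c then 1 else 0 := by
    unfold cr2
    rw [Finset.sum_insert hn, Finset.sum_eq_zero (fun C hC => if_neg (a1 C hC)), zero_add,
      ← Finset.sum_add_distrib]
    apply Finset.sum_congr rfl
    intro B hB
    rw [Finset.sum_insert hn, add_comm]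
    simp only [a2 B hB]
  have c2 : covSum π (pmOpen N π) = (∑ B ∈ π, if Cov B c then 1 else 0) +
      covSum π ((pmOpen N π).erase c) := by
    unfold covSum
    rw [← Finset.sum_add_distrib]
    apply Finset.sum_congr rfl
    intro B hB
    rw [Finset.add_sum_erase _ (fun x => if Cov B x then 1 else 0) hc]
  have c3 : covSum (insert {c, N+1} π) ((pmOpen N π).erase c) =
      ((pmOpen N π).filter (fun o => c < o)).card + covSum π ((pmOpen N π).erase c) := by
    unfold covSum
    rw [Finset.sum_insert hn]
    congr 1
    rw [Finset.sum_congr rfl (fun x hx => if_congr (a3 x hx) rfl rfl), ← Finset.card_filter]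
    congr 1
    ext x
    simp only [Finset.mem_filter, Finset.mem_erase]
    constructor
    · rintro ⟨⟨_, h1⟩, h2⟩; exact ⟨h1, h2⟩
    · rintro ⟨h1, h2⟩; exact ⟨⟨by omega, h1⟩, h2⟩
  rw [c1, c2, c3]
  ring

theorem sum_rank (q : ℝ) (S : Finset ℕ) :
    ∑ c ∈ S, q ^ (S.filter (fun o => c < o)).card = qlam q S.card := by
  induction S using Finset.induction_on_min with
  | empty => simp [qlam]
  | insert a s ha ih =>
    have hn : a ∉ s := fun h => lt_irrefl _ (ha a h)
    rw [Finset.sum_insert hn, Finset.card_insert_of_notMem hn]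
    have e : (insert a s).filter (fun o => a < o) = s := by
      ext x
      simp only [Finset.mem_filter, Finset.mem_insert]
      constructor
      · rintro ⟨rfl | h, h2⟩
        · omega
        · exact h
      · intro h; exact ⟨Or.inr h, ha x h⟩
    rw [e]
    have e2 : ∀ c ∈ s, q ^ ((insert a s).filter (fun o => c < o)).card = q ^ (s.filter (fun o => c < o)).card := by
      intro c hc
      rw [Finset.filter_insert, if_neg (not_lt.2 (ha c hc).le)]
    rw [Finset.sum_congr rfl e2, ih]
    unfold qlam
    rw [Finset.sum_range_succ, add_comm]

noncomputable def pathA (q : ℝ) (N h : ℕ) : ℝ :=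
  ∑ π ∈ PMs N, if (pmOpen N π).card = h then q ^ (cr2 π + covSum π (pmOpen N π)) else 0

theorem pathA_split (q : ℝ) (N h : ℕ) :
    pathA q (N+1) h =
      (∑ π ∈ PMs N, if (pmOpen N π).card + 1 = h then q ^ (cr2 π + covSum π (pmOpen N π)) else 0)
      + qlam q (h+1) * pathA q N (h+1) := by
  unfold pathA
  rw [PMs_split]
  congr 1
  · apply Finset.sum_congr rfl
    intro π hπ
    rw [mem_PMs] at hπ
    rw [cov_succ hπ, pmOpen_succ hπ, Finset.card_insert_of_notMem (by simp [mem_pmOpen])]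
  · rw [Finset.mul_sum]
    apply Finset.sum_congr rfl
    intro π hπ
    rw [mem_PMs] at hπ
    have : ∀ c ∈ pmOpen N π, (if (pmOpen (N+1) (insert {c, N+1} π)).card = h then
        q ^ (cr2 (insert {c, N+1} π) + covSum (insert {c, N+1} π) (pmOpen (N+1) (insert {c, N+1} π))) else 0)
        = (if (pmOpen N π).card = h + 1 then q ^ (cr2 π + covSum π (pmOpen N π)) else 0) *
          q ^ ((pmOpen N π).filter (fun o => c < o)).card := by
      intro c hc
      rw [pmOpen_insert, st_insert hπ hc, Finset.card_erase_of_mem hc]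
      have hp : 0 < (pmOpen N π).card := Finset.card_pos.2 ⟨c, hc⟩
      by_cases hh : (pmOpen N π).card = h + 1
      · rw [if_pos (by omega), if_pos hh, pow_add]
      · rw [if_neg (by omega), if_neg hh, zero_mul]
    rw [Finset.sum_congr rfl this, ← Finset.mul_sum, sum_rank]
    by_cases hh : (pmOpen N π).card = h + 1
    · rw [hh, mul_comm]
    · rw [if_neg hh]; simp

theorem PMs_zero : PMs 0 = {∅} := by
  ext π
  rw [mem_PMs, Finset.mem_singleton]
  constructor
  · intro h
    rw [Finset.eq_empty_iff_forall_notMem]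
    intro B hB
    obtain ⟨h1, h2⟩ := h.1 B hB
    have : B = ∅ := by simpa using h2
    subst this
    simp at h1
  · rintro rfl
    constructor <;> simp

theorem pathA_rec (q : ℝ) : PathRec q (pathA q) where
  init0 := by simp [pathA, PMs_zero, pmOpen, cr2, covSum]
  init1 := by intro h; simp [pathA, PMs_zero, pmOpen]
  step0 := by intro N; rw [pathA_split]; simp
  step1 := by
    intro N h
    rw [pathA_split]
    simp [pathA]

theorem crNum_eq (π : Finset (Finset ℕ)) : crNum π = cr2 π := by
  unfold crNum cr2
  rw [← Finset.sum_product', ← Finset.card_filter, ← Set.ncard_coe_finset]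
  congr 1
  ext p
  simp [and_assoc]

theorem isPairing_iff (n : ℕ) (π : Finset (Finset ℕ)) :
    IsPairing n π ↔ IsPM (2*n) π ∧ (pmOpen (2*n) π).card = 0 := by
  rw [Finset.card_eq_zero, Finset.eq_empty_iff_forall_notMem]
  constructor
  · rintro ⟨h1, h2⟩
    refine ⟨⟨h1, ?_⟩, ?_⟩
    · intro B hB C hC x hxB hxC
      exact (h2 x ((h1 B hB).2 hxB)).unique ⟨hB, hxB⟩ ⟨hC, hxC⟩
    · intro x hx
      rw [mem_pmOpen] at hx
      obtain ⟨B, ⟨hB, hxB⟩, _⟩ := h2 x (Finset.mem_Icc.2 hx.1)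
      exact hx.2 B hB hxB
  · rintro ⟨h, h'⟩
    refine ⟨h.1, fun x hx => ?_⟩
    have := h' x
    rw [mem_pmOpen] at this
    push Not at this
    obtain ⟨B, hB, hx⟩ := this (Finset.mem_Icc.1 hx)
    exact ⟨B, ⟨hB, hx⟩, fun C hC => h.2 C hC.1 B hB x hC.2 hx⟩

theorem IsPM.card_le {n : ℕ} {π : Finset (Finset ℕ)} (h : IsPM (2*n) π) : π.card ≤ n := by
  have a : (π.biUnion id).card = ∑ B ∈ π, B.card := by
    apply Finset.card_biUnion
    intro B hB C hC hne
    rw [Function.onFun, Finset.disjoint_left]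
    intro x hx hx'
    exact hne (h.2 B hB C hC x hx hx')
  rw [Finset.sum_congr rfl (fun B hB => (h.1 B hB).1)] at a
  have b : (π.biUnion id).card ≤ (Finset.Icc 1 (2*n)).card := by
    apply Finset.card_le_card
    intro x hx
    obtain ⟨B, hB, hx⟩ := Finset.mem_biUnion.1 hx
    exact (h.1 B hB).2 hx
  simp at a b
  omega

theorem cr2_le (π : Finset (Finset ℕ)) : cr2 π ≤ π.card * π.card := by
  unfold cr2
  rw [← Finset.sum_product', ← Finset.card_filter, ← Finset.card_product]
  exact Finset.card_filter_le _ _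

theorem TpolyR_eq (n : ℕ) (q : ℝ) : TpolyR n q = pathA q (2*n) 0 := by
  unfold TpolyR pathA
  rw [← Finset.sum_filter]
  set P := (PMs (2*n)).filter (fun π => (pmOpen (2*n) π).card = 0) with hP
  have hc : ∀ k, tCount n k = (P.filter (fun π => cr2 π = k)).card := by
    intro k
    unfold tCount
    rw [← Set.ncard_coe_finset]
    congr 1
    ext π
    simp only [Set.mem_setOf_eq, Finset.coe_filter, hP, Finset.mem_filter, mem_PMs, isPairing_iff, crNum_eq]
  have e : ∀ π ∈ P, q ^ (cr2 π + covSum π (pmOpen (2*n) π)) = q ^ cr2 π := by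
    intro π hπ
    have := (Finset.mem_filter.1 hπ).2
    rw [Finset.card_eq_zero] at this
    rw [this]; simp [covSum]
  rw [Finset.sum_congr rfl e, ← Finset.sum_fiberwise_of_maps_to (t := Finset.range (n*n+1)) (g := cr2)]
  · apply Finset.sum_congr rfl
    intro k _
    rw [hc, Finset.sum_congr rfl (fun π hπ => by rw [(Finset.mem_filter.1 hπ).2]), Finset.sum_const, nsmul_eq_mul]
  · intro π hπ
    have h1 := (mem_PMs.1 (Finset.mem_filter.1 hπ).1).card_le
    have := cr2_le π
    have := Nat.mul_le_mul h1 h1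
    rw [Finset.mem_range]; omega

/-- For every `q ∈ (-1,1)`, `|T_n(q)|^{1/(2n)} → 2/√(1−q)` as `n → ∞`. -/
theorem tpoly_abs_rpow_tendsto (q : ℝ) (h1 : -1 < q) (h2 : q < 1) :
    Filter.Tendsto (fun n : ℕ => |TpolyR n q| ^ ((1 : ℝ) / (2 * (n : ℝ))))
      Filter.atTop (nhds (2 / Real.sqrt (1 - q))) := by
  simp only [TpolyR_eq]
  exact (pathA_rec q).lim h1 h2
end

section
/- For every n ≥ 1, there is no parity-reversing pairing on [2n] with exactly one crossing and no parity-reversing pairing on [2n] with exactly two crossings; that is, r_{n,1} = 0 and r_{n,2} = 0. -/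
open scoped Classical

theorem crosses_of_lt {a b x y : ℕ} (hab : a < b) (hx : a < x ∧ x < b)
    (hy : y < a ∨ b < y) : Crosses {a, b} {x, y} := by
  rcases hy with hy | hy
  · right
    exact ⟨y, x, a, b, hy, hx.1, hx.2, Finset.pair_comm _ _, rfl⟩
  · left
    exact ⟨a, b, x, y, hx.1, hx.2, hy, rfl, rfl⟩

theorem pair_sorted {a b c d : ℕ} (hab : a < b) (hcd : c < d)
    (h : ({a, b} : Finset ℕ) = {c, d}) : a = c ∧ b = d := by
  have h1 : a ∈ ({c, d} : Finset ℕ) := by rw [← h]; simp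
  have h2 : b ∈ ({c, d} : Finset ℕ) := by rw [← h]; simp
  simp only [Finset.mem_insert, Finset.mem_singleton] at h1 h2
  omega

theorem crosses_form {a b : ℕ} {C : Finset ℕ} (hab : a < b) (h : Crosses {a, b} C) :
    ∃ c d, C = {c, d} ∧ a < c ∧ c < b ∧ (d < a ∨ b < d) := by
  rcases h with ⟨a', b', c, d, h1, h2, h3, h4, h5⟩ | ⟨c, d, a', b', h1, h2, h3, h4, h5⟩
  · obtain ⟨rfl, rfl⟩ := pair_sorted hab (by omega) h4
    exact ⟨c, d, h5, h1, h2, Or.inr h3⟩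
  · obtain ⟨rfl, rfl⟩ := pair_sorted hab (by omega) h5
    exact ⟨d, c, by rw [h4, Finset.pair_comm], h2, h3, Or.inl h1⟩

theorem second_crosser {n : ℕ} {π : Finset (Finset ℕ)} (hp : IsPairing n π)
    (hr : ParityReversing π) {B C : Finset ℕ} (hB : B ∈ π) (hC : C ∈ π)
    (h : Crosses B C) : ∃ D ∈ π, D ≠ C ∧ Crosses B D := by
  by_contra! hno
  obtain ⟨a, b, hab, rfl, hpar⟩ : ∃ a b : ℕ, a < b ∧ B = {a, b} ∧ (a + b) % 2 = 1 := by
    obtain ⟨a, b, rfl, ho, he⟩ := hr B hB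
    have ho' := Nat.odd_iff.1 ho
    have he' := Nat.even_iff.1 he
    rcases lt_trichotomy a b with h | h | h
    · exact ⟨a, b, h, rfl, by omega⟩
    · omega
    · exact ⟨b, a, h, Finset.pair_comm _ _, by omega⟩
  obtain ⟨c, d, rfl, hac, hcb, hd⟩ := crosses_form hab h
  have huniq : ∀ X ∈ π, ∀ Y ∈ π, ∀ x, x ∈ X → x ∈ Y → X = Y := by
    intro X hX Y hY x hx hy
    exact (hp.2 x ((hp.1 X hX).2 hx)).unique ⟨hX, hx⟩ ⟨hY, hy⟩
  set S := π.filter (fun X => X ⊆ Finset.Ioo a b) with hS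
  have hcS : c ∉ S.biUnion id := by
    intro hc
    simp only [Finset.mem_biUnion, id, hS, Finset.mem_filter] at hc
    obtain ⟨X, ⟨hX, hXI⟩, hcX⟩ := hc
    have := huniq X hX _ hC c hcX (by simp)
    subst this
    have := hXI (show d ∈ ({c, d} : Finset ℕ) by simp)
    simp only [Finset.mem_Ioo] at this
    omega
  have hI : Finset.Ioo a b = insert c (S.biUnion id) := by
    ext x
    simp only [Finset.mem_insert, Finset.mem_biUnion, id]
    constructor
    · intro hx
      by_cases hxc : x = c
      · exact Or.inl hxc
      right
      have hx' := Finset.mem_Ioo.1 hx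
      have ha1 := Finset.mem_Icc.1 ((hp.1 _ hB).2 (show a ∈ ({a, b} : Finset ℕ) by simp))
      have hb1 := Finset.mem_Icc.1 ((hp.1 _ hB).2 (show b ∈ ({a, b} : Finset ℕ) by simp))
      obtain ⟨X, ⟨hX, hxX⟩, -⟩ := hp.2 x (Finset.mem_Icc.2 ⟨by omega, by omega⟩)
      obtain ⟨y, rfl⟩ : ∃ y, X = {x, y} := by
        obtain ⟨u, v, -, rfl⟩ := Finset.card_eq_two.1 (hp.1 X hX).1
        simp only [Finset.mem_insert, Finset.mem_singleton] at hxX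
        rcases hxX with rfl | rfl
        · exact ⟨v, rfl⟩
        · exact ⟨u, Finset.pair_comm _ _⟩
      have hXC : ({x, y} : Finset ℕ) ≠ {c, d} := by
        intro he
        have : x ∈ ({c, d} : Finset ℕ) := he ▸ hxX
        simp only [Finset.mem_insert, Finset.mem_singleton] at this
        omega
      have hnB : ({x, y} : Finset ℕ) ≠ {a, b} := by
        intro he
        have : x ∈ ({a, b} : Finset ℕ) := he ▸ hxX
        simp only [Finset.mem_insert, Finset.mem_singleton] at this
        omega
      have hya : y ≠ a := by
        rintro rfl
        exact hnB (huniq _ hX _ hB y (by simp) (by simp))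
      have hyb : y ≠ b := by
        rintro rfl
        exact hnB (huniq _ hX _ hB y (by simp) (by simp))
      have hnc := hno _ hX hXC
      have hy : a < y ∧ y < b := by
        by_contra hy
        exact hnc (crosses_of_lt hab hx' (by omega))
      refine ⟨_, Finset.mem_filter.2 ⟨hX, ?_⟩, hxX⟩
      intro z hz
      simp only [Finset.mem_insert, Finset.mem_singleton] at hz
      rcases hz with rfl | rfl
      · exact hx
      · exact Finset.mem_Ioo.2 hy
    · rintro (rfl | ⟨X, hX, hx⟩)
      · exact Finset.mem_Ioo.2 ⟨hac, hcb⟩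
      · exact (Finset.mem_filter.1 hX).2 hx
  have hcard : (S.biUnion id).card = S.card * 2 := by
    rw [Finset.card_biUnion]
    · exact Finset.sum_const_nat fun X hX => (hp.1 X (Finset.mem_filter.1 hX).1).1
    · intro X hX Y hY hne
      refine Finset.disjoint_left.2 ?_
      intro x hx hy
      exact hne (huniq X (Finset.mem_filter.1 hX).1 Y (Finset.mem_filter.1 hY).1 x hx hy)
  have hfin := congrArg Finset.card hI
  rw [Finset.card_insert_of_notMem hcS, hcard, Nat.card_Ioo] at hfin
  omega

theorem Crosses.irrefl (B : Finset ℕ) : ¬ Crosses B B := by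
  have : ¬ CrossAsym B B := by
    rintro ⟨a, b, c, d, h1, h2, h3, h4, h5⟩
    have := pair_sorted (by omega) (by omega) (h4.symm.trans h5)
    omega
  rintro (h | h) <;> exact this h

theorem crNum_big {n : ℕ} {π : Finset (Finset ℕ)} (hp : IsPairing n π)
    (hr : ParityReversing π) (h0 : crNum π ≠ 0) : 3 ≤ crNum π := by
  unfold crNum at *
  set E := {p : Finset ℕ × Finset ℕ | p.1 ∈ π ∧ p.2 ∈ π ∧ CrossAsym p.1 p.2} with hE
  have hfin : E.Finite := Set.finite_of_ncard_ne_zero h0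
  obtain ⟨⟨B, C⟩, hB, hC, hBC⟩ := Set.nonempty_of_ncard_ne_zero h0
  have get : ∀ X ∈ π, ∀ Y ∈ π, Crosses X Y → ∃ p ∈ E, p = (X, Y) ∨ p = (Y, X) := by
    rintro X hX Y hY (h | h)
    · exact ⟨(X, Y), ⟨hX, hY, h⟩, Or.inl rfl⟩
    · exact ⟨(Y, X), ⟨hY, hX, h⟩, Or.inr rfl⟩
  dsimp only at hB hC hBC
  obtain ⟨D, hD, hDC, hBD⟩ := second_crosser hp hr hB hC (Or.inl hBC)
  obtain ⟨A, hA, hAB, hCA⟩ := second_crosser hp hr hC hB (Or.inr hBC)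
  have hne : B ≠ C := by
    rintro rfl
    exact Crosses.irrefl _ (Or.inl hBC)
  obtain ⟨q, hq, hq'⟩ := get B hB D hD hBD
  obtain ⟨r, hr, hr'⟩ := get C hC A hA hCA
  have h3 : ({(B, C), q, r} : Set (Finset ℕ × Finset ℕ)).ncard = 3 := by
    rw [Set.ncard_eq_three]
    refine ⟨(B, C), q, r, ?_, ?_, ?_, rfl⟩
    all_goals
      rcases hq' with rfl | rfl <;> rcases hr' with rfl | rfl <;>
        simp only [ne_eq, Prod.mk.injEq] <;> grind
  rw [← h3]
  apply Set.ncard_le_ncard _ hfin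
  rintro p (rfl | rfl | rfl)
  · exact ⟨hB, hC, hBC⟩
  · exact hq
  · exact hr

/-- There are no parity-reversing pairings on `[2n]` with exactly one or two crossings. -/
theorem rCount_one_two_eq_zero (n : ℕ) (hn : 1 ≤ n) :
    rCount n 1 = 0 ∧ rCount n 2 = 0 := by
  unfold rCount
  constructor
  all_goals
    convert Set.ncard_empty (Finset (Finset ℕ))
    rw [Set.eq_empty_iff_forall_notMem]
    rintro π ⟨hp, hr, hk⟩
    have := crNum_big hp hr (by omega)
    omega
end
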